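/- arXiv:1104.2568 — 3 statements merged into one kernel-verified Lean document; each statement's English description precedes it below -/
import Mathlib

section
/- For every z ∈ ℂ^g the series Σ_{m∈ℤ^g} exp((1/2)⟨Bm,m⟩ + ⟨m,z⟩) converges absolutely, and the Riemann theta function Θ : ℂ^g → ℂ that it defines is holomorphic (complex analytic) on all of ℂ^g. -/
open Complex ComplexConjugate

noncomputable section

/-- Bilinear pairing ⟨u,v⟩ = Σ uᵢ vᵢ (no complex conjugation). -/
def pairC {g : ℕ} (u v : Fin g → ℂ) : ℂ := ∑ i, u i * v i

/-- The Riemann theta function with period matrix `B`. -/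
def theta {g : ℕ} (B : Matrix (Fin g) (Fin g) ℂ) (z : Fin g → ℂ) : ℂ :=
  ∑' m : Fin g → ℤ,
    Complex.exp ((1 / 2) * pairC (B.mulVec (fun i => (m i : ℂ))) (fun i => (m i : ℂ))
      + pairC (fun i => (m i : ℂ)) z)

/-!
The `m`-th term of the theta series is `exp ⟨m, z⟩` times a coefficient of modulus `exp (-Q m)`,
where the quadratic form `Q = -½ Re B` is positive definite. By compactness of the unit sphere
`Q m ≥ c ∑ᵢ mᵢ²`, so for every `R` the sum over `ℤ^g` of `exp (-Q m + R ∑ᵢ |mᵢ|)` is dominated by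
a product of `g` one-dimensional Gaussian sums. The coefficients thus decay faster than any
exponential of the frequencies; expanding each `exp ⟨m, z⟩` at the origin then yields an absolutely
convergent double series, and interchanging the summations gives a power series converging on all
of `ℂ^g`.
-/

open scoped NNReal ENNReal

section PowerSeries

variable {ι 𝕜 E F : Type*} [NontriviallyNormedField 𝕜] [NormedAddCommGroup E] [NormedSpace 𝕜 E]
  [NormedAddCommGroup F] [NormedSpace 𝕜 F]

theorem summable_norm_apply_of_summable_norm_mul_pow {p : ι → FormalMultilinearSeries 𝕜 E F}
    {s : ℝ≥0} (hs : s ≠ 0) (hp : Summable fun q : ι × ℕ => ‖p q.1 q.2‖ * (s : ℝ) ^ q.2) (n : ℕ) :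
    Summable fun i => ‖p i n‖ :=
  (summable_mul_right_iff (pow_ne_zero n (NNReal.coe_ne_zero.2 hs))).1 (hp.prod_symm.prod_factor n)

theorem le_radius_tsum {p : ι → FormalMultilinearSeries 𝕜 E F} {s : ℝ≥0}
    (hp : Summable fun q : ι × ℕ => ‖p q.1 q.2‖ * (s : ℝ) ^ q.2) :
    (s : ℝ≥0∞) ≤ FormalMultilinearSeries.radius fun n => ∑' i, p i n := by
  obtain rfl | hs := eq_or_ne s 0
  · simp
  refine FormalMultilinearSeries.le_radius_of_summable _ <|
    hp.prod_symm.prod.of_nonneg_of_le (fun n => by positivity) fun n => ?_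
  simp only [Prod.swap, tsum_mul_right]
  gcongr
  exact norm_tsum_le_tsum_norm (summable_norm_apply_of_summable_norm_mul_pow hs hp n)

theorem hasFPowerSeriesOnBall_tsum [CompleteSpace F] {f : ι → E → F}
    {p : ι → FormalMultilinearSeries 𝕜 E F} {x : E} {r : ℝ≥0∞} (hr : 0 < r)
    (hf : ∀ i, HasFPowerSeriesOnBall (f i) (p i) x r)
    (hp : ∀ s : ℝ≥0, s < r → Summable fun q : ι × ℕ => ‖p q.1 q.2‖ * (s : ℝ) ^ q.2) :
    HasFPowerSeriesOnBall (fun y => ∑' i, f i y) (fun n => ∑' i, p i n) x r where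
  r_le := ENNReal.le_of_forall_nnreal_lt fun s hs => le_radius_tsum (hp s hs)
  r_pos := hr
  hasSum {y} hy := by
    have hyr : (‖y‖₊ : ℝ≥0∞) < r := by simpa [enorm_eq_nnnorm] using hy
    have hdouble : Summable fun q : ι × ℕ => p q.1 q.2 fun _ => y :=
      (hp ‖y‖₊ hyr).of_norm_bounded fun q => by
        simpa using (p q.1 q.2).le_opNorm fun _ => y
    have hcoeff (n : ℕ) : HasSum (fun i => p i n fun _ => y) ((∑' i, p i n) fun _ => y) := by
      obtain ⟨s, hs, hsr⟩ := ENNReal.lt_iff_exists_nnreal_btwn.1 hr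
      have hpn := summable_norm_apply_of_summable_norm_mul_pow (by simpa using hs.ne') (hp s hsr) n
      exact hpn.of_norm.hasSum.mapL (ContinuousMultilinearMap.apply 𝕜 (fun _ => E) F fun _ => y)
    have hrows := hdouble.hasSum.prod_fiberwise fun i => (hf i).hasSum hy
    have hcolumns := ((Equiv.prodComm ℕ ι).hasSum_iff.2 hdouble.hasSum).prod_fiberwise hcoeff
    rwa [hrows.tsum_eq]

end PowerSeries

section ExponentialSeries

variable {ι E F : Type*} [NormedAddCommGroup E] [NormedSpace ℂ E] [NormedAddCommGroup F]
  [NormedSpace ℂ F]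

theorem norm_expSeries {𝕂 𝔸 : Type*} [RCLike 𝕂] [NormedRing 𝔸] [NormedAlgebra 𝕂 𝔸]
    [NormOneClass 𝔸] (n : ℕ) : ‖NormedSpace.expSeries 𝕂 𝔸 n‖ = (n.factorial : ℝ)⁻¹ := by
  rw [NormedSpace.expSeries_eq_ofScalars, FormalMultilinearSeries.ofScalars_norm, norm_inv,
    RCLike.norm_natCast]

/-- The Taylor series at the origin of `z ↦ exp (l z) • a`. -/
def expSMulSeries (l : E →L[ℂ] ℂ) (a : F) : FormalMultilinearSeries ℂ E F :=
  (ContinuousLinearMap.toSpanSingleton ℂ a).compFormalMultilinearSeries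
    ((NormedSpace.expSeries ℂ ℂ).compContinuousLinearMap l)

theorem hasFPowerSeriesOnBall_exp_smul (l : E →L[ℂ] ℂ) (a : F) :
    HasFPowerSeriesOnBall (fun z => Complex.exp (l z) • a) (expSMulSeries l a) 0 ∞ := by
  have hexp : HasFPowerSeriesOnBall Complex.exp (NormedSpace.expSeries ℂ ℂ) (l 0) ∞ := by
    simpa only [map_zero, Complex.exp_eq_exp_ℂ] using
      NormedSpace.exp_hasFPowerSeriesOnBall (𝕂 := ℂ) (𝔸 := ℂ)
  have hcomp := hexp.compContinuousLinearMap
  rw [ENNReal.top_div_of_ne_top enorm_ne_top] at hcomp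
  exact (ContinuousLinearMap.toSpanSingleton ℂ a).comp_hasFPowerSeriesOnBall hcomp

theorem norm_expSMulSeries_le (l : E →L[ℂ] ℂ) (a : F) (n : ℕ) :
    ‖expSMulSeries l a n‖ ≤ ‖a‖ * (‖l‖ ^ n / n.factorial) := by
  refine (ContinuousLinearMap.norm_compContinuousMultilinearMap_le _ _).trans ?_
  rw [ContinuousLinearMap.norm_toSpanSingleton]
  gcongr
  refine (FormalMultilinearSeries.norm_compContinuousLinearMap_le _ _ _).trans_eq ?_
  rw [norm_expSeries, div_eq_inv_mul]

theorem summable_norm_exp_smul {a : ι → F} {l : ι → E →L[ℂ] ℂ}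
    (h : ∀ R : ℝ≥0, Summable fun i => ‖a i‖ * Real.exp (R * ‖l i‖)) (z : E) :
    Summable fun i => ‖Complex.exp (l i z) • a i‖ := by
  refine (h ‖z‖₊).of_nonneg_of_le (fun i => norm_nonneg _) fun i => ?_
  rw [norm_smul, mul_comm, coe_nnnorm, mul_comm ‖z‖]
  gcongr
  exact (Complex.norm_exp_le_exp_norm _).trans (Real.exp_le_exp.2 ((l i).le_opNorm z))

theorem analyticOnNhd_tsum_exp_smul [CompleteSpace F] {a : ι → F} {l : ι → E →L[ℂ] ℂ}
    (h : ∀ R : ℝ≥0, Summable fun i => ‖a i‖ * Real.exp (R * ‖l i‖)) :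
    AnalyticOnNhd ℂ (fun z => ∑' i, Complex.exp (l i z) • a i) Set.univ := by
  have hseries := hasFPowerSeriesOnBall_tsum ENNReal.zero_lt_top
    (fun i => hasFPowerSeriesOnBall_exp_smul (l i) (a i)) fun s _ => ?_
  · simpa only [Metric.eball_top] using hseries.analyticOnNhd
  have hexp (i : ι) : HasSum (fun n : ℕ => ‖a i‖ * ((s * ‖l i‖) ^ n / n.factorial))
      (‖a i‖ * Real.exp (s * ‖l i‖)) := by
    simpa only [Real.exp_eq_exp_ℝ] using
      (NormedSpace.expSeries_div_hasSum_exp (s * ‖l i‖ : ℝ)).mul_left ‖a i‖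
  have hmajorant : Summable fun q : ι × ℕ => ‖a q.1‖ * ((s * ‖l q.1‖) ^ q.2 / q.2.factorial) :=
    (summable_prod_of_nonneg fun q => by simp only [Pi.zero_apply]; positivity).2
      ⟨fun i => (hexp i).summable, (h s).congr fun i => (hexp i).tsum_eq.symm⟩
  refine hmajorant.of_nonneg_of_le (fun q => by positivity) fun q => ?_
  calc ‖expSMulSeries (l q.1) (a q.1) q.2‖ * (s : ℝ) ^ q.2
      ≤ ‖a q.1‖ * (‖l q.1‖ ^ q.2 / q.2.factorial) * (s : ℝ) ^ q.2 := by
        gcongr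
        exact norm_expSMulSeries_le _ _ _
    _ = ‖a q.1‖ * ((s * ‖l q.1‖) ^ q.2 / q.2.factorial) := by ring

end ExponentialSeries

section LatticeSums

theorem summable_pi_prod_of_nonneg {ι : Type*} [Fintype ι] {α : ι → Type*} {f : ∀ i, α i → ℝ}
    (hf₀ : ∀ i a, 0 ≤ f i a) (hf : ∀ i, Summable (f i)) :
    Summable fun x : ∀ i, α i => ∏ i, f i (x i) := by
  classical
  refine summable_of_sum_le (c := ∏ i, ∑' a, f i a)
    (fun x => Finset.prod_nonneg fun i _ => hf₀ i _) fun u => ?_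
  let box (i : ι) : Finset (α i) := u.image (· i)
  have hbox : u ⊆ Fintype.piFinset box := fun x hx =>
    Fintype.mem_piFinset.2 fun i => Finset.mem_image_of_mem _ hx
  calc ∑ x ∈ u, ∏ i, f i (x i)
      ≤ ∑ x ∈ Fintype.piFinset box, ∏ i, f i (x i) :=
        Finset.sum_le_sum_of_subset_of_nonneg hbox fun x _ _ =>
          Finset.prod_nonneg fun i _ => hf₀ i _
    _ = ∏ i, ∑ a ∈ box i, f i a := (Finset.prod_univ_sum box f).symm
    _ ≤ ∏ i, ∑' a, f i a :=
        Finset.prod_le_prod (fun i _ => Finset.sum_nonneg fun a _ => hf₀ i a) fun i _ =>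
          (hf i).sum_le_tsum _ fun a _ => hf₀ i a

theorem summable_int_exp_neg_mul_sq_add_mul_abs {c : ℝ} (hc : 0 < c) (R : ℝ) :
    Summable fun n : ℤ => Real.exp (-c * (n : ℝ) ^ 2 + R * |(n : ℝ)|) := by
  refine (summable_pow_mul_jacobiTheta₂_term_bound (R / (2 * Real.pi))
    (div_pos hc Real.pi_pos) 0).congr fun n => ?_
  rw [pow_zero, one_mul, Int.cast_abs]
  congr 1
  field_simp
  ring

theorem continuous_quadraticForm {𝕜 E : Type*} [NontriviallyNormedField 𝕜] [CompleteSpace 𝕜]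
    [Invertible (2 : 𝕜)] [NormedAddCommGroup E] [NormedSpace 𝕜 E] [FiniteDimensional 𝕜 E]
    (Q : QuadraticForm 𝕜 E) : Continuous Q := by
  have hQ : ⇑Q = fun x => (QuadraticMap.associated Q).toContinuousBilinearMap x x :=
    funext fun x => (QuadraticMap.associated_eq_self_apply 𝕜 Q x).symm
  rw [hQ]
  fun_prop

theorem exists_pos_mul_norm_sq_le_of_posDef {E : Type*} [NormedAddCommGroup E] [NormedSpace ℝ E]
    [FiniteDimensional ℝ E] {Q : QuadraticForm ℝ E} (hQ : Q.PosDef) :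
    ∃ c > 0, ∀ x, c * ‖x‖ ^ 2 ≤ Q x := by
  obtain _ | _ := subsingleton_or_nontrivial E
  · exact ⟨1, one_pos, fun x => by simp [Subsingleton.elim x 0]⟩
  obtain ⟨x₀, hx₀, hmin⟩ := (isCompact_sphere (0 : E) 1).exists_isMinOn
    (NormedSpace.sphere_nonempty.2 zero_le_one) (continuous_quadraticForm Q).continuousOn
  refine ⟨Q x₀, hQ x₀ (ne_zero_of_mem_unit_sphere ⟨x₀, hx₀⟩), fun x => ?_⟩
  obtain rfl | hx := eq_or_ne x 0
  · simp
  have hunit : Q x₀ ≤ Q (‖x‖⁻¹ • x) := hmin (by simp [norm_smul, hx])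
  rw [QuadraticMap.map_smul, smul_eq_mul, ← mul_inv, inv_mul_eq_div,
    le_div_iff₀ (by positivity)] at hunit
  rwa [pow_two]

theorem exists_pos_mul_sum_sq_le_of_posDef {ι : Type*} [Fintype ι] {Q : QuadraticForm ℝ (ι → ℝ)}
    (hQ : Q.PosDef) : ∃ c > 0, ∀ x, c * ∑ i, x i ^ 2 ≤ Q x := by
  let e := WithLp.linearEquiv 2 ℝ (ι → ℝ)
  have hQe : (Q.comp e.toLinearMap).PosDef := fun x hx => hQ _ (e.map_ne_zero_iff.2 hx)
  obtain ⟨c, hc, hle⟩ := exists_pos_mul_norm_sq_le_of_posDef hQe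
  refine ⟨c, hc, fun x => ?_⟩
  simpa [EuclideanSpace.real_norm_sq_eq, e] using hle (e.symm x)

theorem summable_exp_neg_quadraticForm_add {ι : Type*} [Fintype ι] {Q : QuadraticForm ℝ (ι → ℝ)}
    (hQ : Q.PosDef) (R : ℝ) :
    Summable fun m : ι → ℤ => Real.exp (-Q (fun i => (m i : ℝ)) + R * ∑ i, |(m i : ℝ)|) := by
  obtain ⟨c, hc, hle⟩ := exists_pos_mul_sum_sq_le_of_posDef hQ
  refine (summable_pi_prod_of_nonneg (fun _ _ => (Real.exp_pos _).le) fun _ : ι =>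
    summable_int_exp_neg_mul_sq_add_mul_abs hc R).of_nonneg_of_le
    (fun m => (Real.exp_pos _).le) fun m => ?_
  rw [← Real.exp_sum, Finset.sum_add_distrib, ← Finset.mul_sum, ← Finset.mul_sum]
  gcongr
  linarith [hle fun i => (m i : ℝ)]

end LatticeSums

section Theta

variable {g : ℕ}

/-- The linear form `z ↦ ⟨u, z⟩`. -/
def pairCLM (u : Fin g → ℂ) : (Fin g → ℂ) →L[ℂ] ℂ :=
  ∑ i, u i • ContinuousLinearMap.proj i

theorem pairCLM_apply (u z : Fin g → ℂ) : pairCLM u z = pairC u z := by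
  simp [pairCLM, pairC]

theorem norm_pairCLM_le (u : Fin g → ℂ) : ‖pairCLM u‖ ≤ ∑ i, ‖u i‖ := by
  refine ContinuousLinearMap.opNorm_le_bound _ (by positivity) fun z => ?_
  rw [pairCLM_apply, pairC, Finset.sum_mul]
  refine norm_sum_le_of_le _ fun i _ => ?_
  rw [norm_mul]
  gcongr
  exact norm_le_pi_norm z i

/-- The coefficient `exp (½ ⟨B m, m⟩)` of `exp ⟨m, z⟩` in the theta series. -/
def thetaCoeff (B : Matrix (Fin g) (Fin g) ℂ) (m : Fin g → ℤ) : ℂ :=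
  Complex.exp ((1 / 2) * pairC (B.mulVec (fun i => (m i : ℂ))) (fun i => (m i : ℂ)))

/-- The real quadratic form `-½ Re B`, which governs the decay of the theta coefficients. -/
def thetaForm (B : Matrix (Fin g) (Fin g) ℂ) : QuadraticForm ℝ (Fin g → ℝ) :=
  (-(1 / 2 : ℝ)) • (B.map re).toQuadraticForm'

theorem thetaForm_apply (B : Matrix (Fin g) (Fin g) ℂ) (x : Fin g → ℝ) :
    thetaForm B x = -(1 / 2) * ∑ i, ∑ j, (B i j).re * x i * x j := by
  simp [thetaForm, Matrix.toQuadraticForm', Matrix.toLinearMap₂'_apply', dotProduct, Matrix.mulVec,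
    Finset.mul_sum, mul_assoc, mul_left_comm]

theorem norm_thetaCoeff (B : Matrix (Fin g) (Fin g) ℂ) (m : Fin g → ℤ) :
    ‖thetaCoeff B m‖ = Real.exp (-thetaForm B fun i => (m i : ℝ)) := by
  have hhalf : (1 / 2 : ℂ) = ((1 / 2 : ℝ) : ℂ) := by norm_num
  rw [thetaCoeff, Complex.norm_exp, thetaForm_apply, hhalf, Complex.re_ofReal_mul]
  simp [pairC, Matrix.mulVec, dotProduct, Finset.sum_mul, mul_right_comm]

theorem exp_pairC_add_eq (B : Matrix (Fin g) (Fin g) ℂ) (m : Fin g → ℤ) (z : Fin g → ℂ) :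
    Complex.exp ((1 / 2) * pairC (B.mulVec (fun i => (m i : ℂ))) (fun i => (m i : ℂ))
      + pairC (fun i => (m i : ℂ)) z) =
    Complex.exp (pairCLM (fun i => (m i : ℂ)) z) • thetaCoeff B m := by
  rw [pairCLM_apply, thetaCoeff, smul_eq_mul, ← Complex.exp_add, add_comm]

theorem summable_norm_thetaCoeff_mul_exp {B : Matrix (Fin g) (Fin g) ℂ} (hB : (thetaForm B).PosDef)
    (R : ℝ≥0) :
    Summable fun m : Fin g → ℤ =>
      ‖thetaCoeff B m‖ * Real.exp (R * ‖pairCLM fun i => (m i : ℂ)‖) := by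
  refine (summable_exp_neg_quadraticForm_add hB R).of_nonneg_of_le (fun m => by positivity)
    fun m => ?_
  rw [norm_thetaCoeff, ← Real.exp_add]
  gcongr
  simpa only [Complex.norm_intCast] using norm_pairCLM_le fun i => (m i : ℂ)

end Theta

theorem stmt_0_general {g : ℕ} (B : Matrix (Fin g) (Fin g) ℂ)
    (hBneg : ∀ x : Fin g → ℝ, x ≠ 0 → ∑ i, ∑ j, (B i j).re * x i * x j < 0) :
    (∀ z : Fin g → ℂ,
      Summable fun m : Fin g → ℤ =>
        ‖Complex.exp ((1 / 2) * pairC (B.mulVec (fun i => (m i : ℂ))) (fun i => (m i : ℂ))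
            + pairC (fun i => (m i : ℂ)) z)‖) ∧
    (∀ z : Fin g → ℂ, AnalyticAt ℂ (theta B) z) := by
  have hpos : (thetaForm B).PosDef := fun x hx => by
    rw [thetaForm_apply]
    linarith [hBneg x hx]
  have hdecay := summable_norm_thetaCoeff_mul_exp hpos
  have htheta : theta B =
      fun z => ∑' m : Fin g → ℤ,
        Complex.exp (pairCLM (fun i => (m i : ℂ)) z) • thetaCoeff B m :=
    funext fun z => tsum_congr fun m => exp_pairC_add_eq B m z
  simp only [exp_pairC_add_eq, htheta]
  exact ⟨summable_norm_exp_smul hdecay, fun z => analyticOnNhd_tsum_exp_smul hdecay z trivial⟩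

/-- the theta series converges absolutely for every `z`, and the theta
function is holomorphic (analytic) on all of `ℂ^g`. -/
theorem stmt_0 {g : ℕ} (hg : 1 ≤ g) (B : Matrix (Fin g) (Fin g) ℂ)
    (hBsymm : B.IsSymm)
    (hBneg : ∀ x : Fin g → ℝ, x ≠ 0 → ∑ i, ∑ j, (B i j).re * x i * x j < 0) :
    (∀ z : Fin g → ℂ,
      Summable fun m : Fin g → ℤ =>
        ‖Complex.exp ((1 / 2) * pairC (B.mulVec (fun i => (m i : ℂ))) (fun i => (m i : ℂ))
            + pairC (fun i => (m i : ℂ)) z)‖) ∧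
    (∀ z : Fin g → ℂ, AnalyticAt ℂ (theta B) z) :=
  stmt_0_general B hBneg
end
end

section
/- Suppose in addition that conj(B) = B − 2πi H for some symmetric g×g matrix H with integer entries. Then for every z ∈ ℂ^g, conj(Θ(z)) = Θ(conj(z) − iπ diag(H)), where diag(H) ∈ ℤ^g is the vector of diagonal entries of H and conj denotes componentwise complex conjugation. -/
open Complex ComplexConjugate

noncomputable section

/-!
Conjugation acts on the theta series term by term. Besides replacing `z` by `conj z`, it changes the
exponent of the term of index `m` by `-πi ⟨Hm, m⟩`, while the translation of `conj z` by
`-πi diag H` changes it by `-πi ⟨diag H, m⟩`. The two integers `⟨Hm, m⟩` and `⟨diag H, m⟩` have the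
same parity because `H` is symmetric, so the two exponents differ by a multiple of `2πi`.
-/

open Matrix

section Parity

variable {ι R : Type*} [Fintype ι]

theorem mulVec_dotProduct_self_of_charTwo [CommRing R] [CharP R 2] {A : Matrix ι ι R}
    (hA : A.IsSymm) (x : ι → R) : A *ᵥ x ⬝ᵥ x = ∑ i, A i i * x i ^ 2 := by
  classical
  -- The off-diagonal terms cancel in pairs under `(i, j) ↦ (j, i)`.
  have offDiag_eq_zero : ∑ p ∈ Finset.univ.offDiag, A p.1 p.2 * x p.2 * x p.1 = 0 := by
    refine Finset.sum_involution (fun p _ => p.swap) (fun p _ => ?_) (fun p hp _ => ?_)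
      (fun p hp => ?_) (fun p _ => p.swap_swap)
    · rw [Prod.fst_swap, Prod.snd_swap, hA.apply, mul_right_comm, CharTwo.add_self_eq_zero]
    · exact fun h => (Finset.mem_offDiag.mp hp).2.2 (congrArg Prod.snd h)
    · simpa [eq_comm] using hp
  calc A *ᵥ x ⬝ᵥ x
      = ∑ p ∈ Finset.univ ×ˢ Finset.univ, A p.1 p.2 * x p.2 * x p.1 := by
        simp only [mulVec, dotProduct, Finset.sum_mul, Finset.sum_product]
    _ = ∑ i, A i i * x i * x i := by
        rw [← Finset.diag_union_offDiag, Finset.sum_union (Finset.disjoint_diag_offDiag _),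
          offDiag_eq_zero, add_zero, Finset.sum_diag]
    _ = ∑ i, A i i * x i ^ 2 := by simp only [pow_two, mul_assoc]

theorem even_diag_dotProduct_sub_mulVec_dotProduct {H : Matrix ι ι ℤ} (hH : H.IsSymm)
    (m : ι → ℤ) : Even (H.diag ⬝ᵥ m - H *ᵥ m ⬝ᵥ m) := by
  rw [← ZMod.intCast_eq_zero_iff_even, Int.cast_sub, sub_eq_zero, eq_comm]
  simpa [mulVec, dotProduct, ZMod.pow_card] using
    mulVec_dotProduct_self_of_charTwo (hH.map (Int.cast : ℤ → ZMod 2)) (fun i => (m i : ZMod 2))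

end Parity

section ThetaExponent

variable {ι : Type*} [Fintype ι]

/-- The exponent `½⟨Bm, m⟩ + ⟨m, z⟩` of the term of index `m` in the Riemann theta series, for an
arbitrary finite index type in place of `Fin g`. -/
def thetaExponent (B : Matrix ι ι ℂ) (z : ι → ℂ) (m : ι → ℤ) : ℂ :=
  (1 / 2) * (B *ᵥ (fun i => (m i : ℂ)) ⬝ᵥ fun i => (m i : ℂ)) + (fun i => (m i : ℂ)) ⬝ᵥ z

theorem theta_eq_tsum_exp_thetaExponent {g : ℕ} (B : Matrix (Fin g) (Fin g) ℂ) (z : Fin g → ℂ) :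
    theta B z = ∑' m, exp (thetaExponent B z m) :=
  rfl

variable {B : Matrix ι ι ℂ} {H : Matrix ι ι ℤ}

theorem conj_mulVec_dotProduct_intCast {c : ℂ}
    (hBH : ∀ i j, conj (B i j) = B i j - c * (H i j : ℂ)) (m : ι → ℤ) :
    conj (B *ᵥ (fun i => (m i : ℂ)) ⬝ᵥ fun i => (m i : ℂ)) =
      (B *ᵥ (fun i => (m i : ℂ)) ⬝ᵥ fun i => (m i : ℂ)) - c * (H *ᵥ m ⬝ᵥ m : ℤ) := by
  simp only [mulVec, dotProduct, map_sum, map_mul, hBH, map_intCast, Int.cast_sum, Int.cast_mul,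
    Finset.sum_mul, Finset.mul_sum, ← Finset.sum_sub_distrib]
  exact Finset.sum_congr rfl fun i _ => Finset.sum_congr rfl fun j _ => by ring

theorem intCast_dotProduct_conj_sub (c : ℂ) (z : ι → ℂ) (d m : ι → ℤ) :
    ((fun i => (m i : ℂ)) ⬝ᵥ fun i => conj (z i) - c * (d i : ℂ)) =
      conj ((fun i => (m i : ℂ)) ⬝ᵥ z) - c * (d ⬝ᵥ m : ℤ) := by
  simp only [dotProduct, map_sum, map_mul, map_intCast, Int.cast_sum, Int.cast_mul,
    Finset.mul_sum, ← Finset.sum_sub_distrib]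
  exact Finset.sum_congr rfl fun i _ => by ring

theorem conj_thetaExponent
    (hBH : ∀ i j, conj (B i j) = B i j - 2 * (Real.pi : ℂ) * I * (H i j : ℂ))
    (z : ι → ℂ) (m : ι → ℤ) :
    conj (thetaExponent B z m) =
      thetaExponent B (fun i => conj (z i) - (Real.pi : ℂ) * I * (H i i : ℂ)) m +
        (H.diag ⬝ᵥ m - H *ᵥ m ⬝ᵥ m : ℤ) * (Real.pi * I) := by
  have conj_half : conj (1 / 2 : ℂ) = 1 / 2 := by rw [map_div₀, map_one, conj_ofNat]
  have linear_part := intCast_dotProduct_conj_sub (Real.pi * I) z H.diag m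
  simp only [diag_apply] at linear_part
  rw [thetaExponent, thetaExponent, map_add, map_mul, conj_half,
    conj_mulVec_dotProduct_intCast hBH, linear_part]
  push_cast
  ring

theorem conj_exp_thetaExponent (hH : H.IsSymm)
    (hBH : ∀ i j, conj (B i j) = B i j - 2 * (Real.pi : ℂ) * I * (H i j : ℂ))
    (z : ι → ℂ) (m : ι → ℤ) :
    conj (exp (thetaExponent B z m)) =
      exp (thetaExponent B (fun i => conj (z i) - (Real.pi : ℂ) * I * (H i i : ℂ)) m) := by
  obtain ⟨k, hk⟩ := (even_diag_dotProduct_sub_mulVec_dotProduct hH m).two_dvd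
  rw [← exp_conj, conj_thetaExponent hBH, exp_eq_exp_iff_exists_int]
  refine ⟨k, ?_⟩
  rw [hk]
  push_cast
  ring

end ThetaExponent

/-- if `conj(B) = B − 2πiH` for a symmetric integer matrix `H`, then
`conj(Θ(z)) = Θ(conj(z) − iπ diag(H))`. -/
theorem stmt_5 {g : ℕ} (hg : 1 ≤ g) (B : Matrix (Fin g) (Fin g) ℂ)
    (hBsymm : B.IsSymm)
    (hBneg : ∀ x : Fin g → ℝ, x ≠ 0 → ∑ i, ∑ j, (B i j).re * x i * x j < 0)
    (H : Matrix (Fin g) (Fin g) ℤ) (hHsymm : H.IsSymm)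
    (hBH : ∀ i j, conj (B i j) = B i j - 2 * (Real.pi : ℂ) * I * (H i j : ℂ))
    (z : Fin g → ℂ) :
    conj (theta B z)
      = theta B (fun i => conj (z i) - (Real.pi : ℂ) * I * (H i i : ℂ)) := by
  simp only [theta_eq_tsum_exp_thetaExponent, conj_tsum, conj_exp_thetaExponent hHsymm hBH]
end
end

section
/- Assume the degenerate Fay identity holds for the data (V_a, W_a, r, K₁(a,b), K₂(a,b)) and for the data (V_b, W_b, −r, K₁(b,a), K₂(b,a)), and the bilinear Fay identity holds for (V_a, V_b, r, q₁, q₂). Let κ₁, κ₂, A ∈ ℂ∖{0}, h ∈ ℂ, d ∈ ℂ^g. Set Z(ξ,η,t) = i(κ₁V_aξ − κ₂V_bη + (κ₁²W_a − κ₂²W_b)t/2), G₁ = κ₁K₁(a,b), G₂ = κ₂K₁(b,a), G₃ = κ₁²K₂(a,b) + κ₂²K₂(b,a) + h, and define ψ = A·Θ(Z−d+r)/Θ(Z−d)·exp(i(−G₁ξ − G₂η + G₃t/2)), ψ* = −(κ₁κ₂q₂/A)·Θ(Z−d−r)/Θ(Z−d)·exp(i(G₁ξ + G₂η − G₃t/2)),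 φ = (1/2)(lnΘ(Z−d))_{ξξ} + (1/2)(lnΘ(Z−d))_{ηη} + h/4, where (lnΘ(Z−d))_{ξξ} denotes ∂_ξ(∂_ξΘ(Z−d)/Θ(Z−d)) and similarly for η. Then on the open set of (ξ,η,t) ∈ ℂ³ where Θ(Z−d) ≠ 0, with subscripts denoting complex partial derivatives, the complexified Davey–Stewartson system holds: iψ_t + (1/2)(ψ_{ξξ} + ψ_{ηη}) + 2φψ = 0; −iψ*_t + (1/2)(ψ*_{ξξ} + ψ*_{ηη}) + 2φψ* = 0; φ_{ξη} + (1/2)((ψψ*)_{ξξ} + (ψψ*)_{ηη}) = 0. -/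
open Complex ComplexConjugate

noncomputable section

/-- First logarithmic directional derivative `D_V ln F (z) = D_V F(z) / F(z)`. -/
def logD {g : ℕ} (V : Fin g → ℂ) (F : (Fin g → ℂ) → ℂ) (z : Fin g → ℂ) : ℂ :=
  fderiv ℂ F z V / F z

/-- Second logarithmic directional derivative `D_V² ln F (z) = D_V (D_V ln F) (z)`. -/
def logD2 {g : ℕ} (V : Fin g → ℂ) (F : (Fin g → ℂ) → ℂ) (z : Fin g → ℂ) : ℂ :=
  fderiv ℂ (logD V F) z V

/-- The degenerate Fay identity for the data `(V, W, r, K₁, K₂)`. -/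
def DegFay {g : ℕ} (B : Matrix (Fin g) (Fin g) ℂ) (V W r : Fin g → ℂ)
    (K₁ K₂ : ℂ) : Prop :=
  ∀ z : Fin g → ℂ, theta B z ≠ 0 → theta B (z + r) ≠ 0 →
    logD W (fun w => theta B (w + r) / theta B w) z
      + logD2 V (fun w => theta B (w + r) / theta B w) z
      + (logD V (fun w => theta B (w + r) / theta B w) z - K₁) ^ 2
      + 2 * logD2 V (theta B) z + K₂ = 0

/-- The bilinear (degenerate Fay) identity for the data `(V, V', r, q₁, q₂)`:
`D_V D_{V'} ln Θ(z) = q₁ + q₂ Θ(z+r)Θ(z−r)/Θ(z)²`. -/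
def BilinFay {g : ℕ} (B : Matrix (Fin g) (Fin g) ℂ) (V V' r : Fin g → ℂ)
    (q₁ q₂ : ℂ) : Prop :=
  ∀ z : Fin g → ℂ, theta B z ≠ 0 →
    fderiv ℂ (logD V' (theta B)) z V
      = q₁ + q₂ * theta B (z + r) * theta B (z - r) / (theta B z) ^ 2

/-!
Multiplied by `Θ(z + r) Θ(z)`, the degenerate Fay identity becomes a bilinear equation of Hirota
type, whose two sides are entire; it therefore holds at every `z`, because the two theta factors are
nonzero on a dense set. In bilinear form it is invariant under `(V, W, r) ↦ (-V, -W, -r)`, so each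
of the two given identities also provides one for the opposite shift. Divided by `Θ(z)²` instead, it
is a linear equation for the quotient `Θ(z + r) / Θ(z)`, with a logarithmic derivative of `Θ` as
potential. Conjugating by the exponential and adding these equations for the directions `V_a` and
`V_b` gives the two Schrödinger equations, for the shifts `r` and `-r`. The third equation follows
because `ψ ψ*` is, by the bilinear identity, `-(ln Θ)_{ξη}` up to a constant.
-/

open Filter
open scoped ContDiff Real Topology

section ExponentialSeries

theorem summable_prod_pi {ι κ : Type*} [Fintype ι] {f : ι → κ → ℝ} (hf₀ : ∀ i k, 0 ≤ f i k)
    (hf : ∀ i, Summable (f i)) : Summable fun x : ι → κ => ∏ i, f i (x i) := by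
  classical
  refine summable_of_sum_le (c := ∏ i, ∑' k, f i k)
    (fun x => Finset.prod_nonneg fun i _ => hf₀ i _) fun u => ?_
  have hu : u ⊆ Fintype.piFinset fun i => u.image fun x => x i := fun x hx =>
    Fintype.mem_piFinset.mpr fun i => Finset.mem_image_of_mem _ hx
  calc ∑ x ∈ u, ∏ i, f i (x i)
      ≤ ∑ x ∈ Fintype.piFinset fun i => u.image fun x => x i, ∏ i, f i (x i) :=
        Finset.sum_le_sum_of_subset_of_nonneg hu fun x _ _ => Finset.prod_nonneg fun i _ => hf₀ i _
    _ = ∏ i, ∑ k ∈ u.image fun x => x i, f i k := (Finset.prod_univ_sum _ _).symm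
    _ ≤ ∏ i, ∑' k, f i k :=
        Finset.prod_le_prod (fun i _ => Finset.sum_nonneg fun k _ => hf₀ i k)
          fun i _ => (hf i).sum_le_tsum _ fun k _ => hf₀ i k

theorem exists_pos_mul_norm_sq_le {E : Type*} [NormedAddCommGroup E] [NormedSpace ℝ E]
    [ProperSpace E] {Q : E → ℝ} (hQ : Continuous Q) (hsmul : ∀ (c : ℝ) x, Q (c • x) = c ^ 2 * Q x)
    (hpos : ∀ x, x ≠ 0 → 0 < Q x) : ∃ δ > 0, ∀ x, δ * ‖x‖ ^ 2 ≤ Q x := by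
  obtain ⟨δ, hδ, hle⟩ := (isCompact_sphere (0 : E) 1).exists_forall_le' hQ.continuousOn
    (a := 0) fun x hx => hpos x (ne_zero_of_mem_unit_sphere ⟨x, hx⟩)
  refine ⟨δ, hδ, fun x => ?_⟩
  rcases eq_or_ne x 0 with rfl | hx
  · simpa using (hsmul 0 0).ge
  · have hunit : ‖x‖⁻¹ • x ∈ Metric.sphere (0 : E) 1 := by
      simp [norm_smul, inv_mul_cancel₀ (norm_ne_zero_iff.mpr hx)]
    calc δ * ‖x‖ ^ 2 ≤ Q (‖x‖⁻¹ • x) * ‖x‖ ^ 2 := by gcongr; exact hle _ hunit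
      _ = Q x := by
        have hnorm := norm_ne_zero_iff.mpr hx
        rw [hsmul]
        field_simp

variable {α E : Type*} [NormedAddCommGroup E] [NormedSpace ℂ E] {c : α → ℂ} {ℓ : α → E →L[ℂ] ℂ}

theorem norm_mul_cexp_apply_le (c : α → ℂ) (ℓ : α → E →L[ℂ] ℂ) {R : ℝ} {z : E} (hz : ‖z‖ ≤ R)
    (a : α) : ‖c a * Complex.exp (ℓ a z)‖ ≤ ‖c a‖ * Real.exp (R * ‖ℓ a‖) := by
  rw [norm_mul]
  gcongr
  refine (Complex.norm_exp_le_exp_norm _).trans (Real.exp_le_exp.mpr ?_)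
  exact ((ℓ a).le_opNorm z).trans ((mul_comm _ _).trans_le (by gcongr))

theorem norm_mul_cexp_smul_le (c : α → ℂ) (ℓ : α → E →L[ℂ] ℂ) {R : ℝ} {z : E} (hz : ‖z‖ ≤ R)
    (a : α) : ‖(c a * Complex.exp (ℓ a z)) • ℓ a‖ ≤ ‖c a‖ * Real.exp ((R + 1) * ‖ℓ a‖) := by
  have hℓ : ‖ℓ a‖ ≤ Real.exp ‖ℓ a‖ := (lt_add_one _).le.trans (Real.add_one_le_exp _)
  rw [norm_smul, add_mul, one_mul, Real.exp_add, ← mul_assoc]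
  gcongr
  exact norm_mul_cexp_apply_le c ℓ hz a

/-- The coefficients `c` decay faster than every exponential of the norms of the frequencies `ℓ`,
so that the exponential series `expSum c ℓ` and all its derivatives converge locally uniformly. -/
def HasRapidDecay (c : α → ℂ) (ℓ : α → E →L[ℂ] ℂ) : Prop :=
  ∀ R : ℝ, Summable fun a => ‖c a‖ * Real.exp (R * ‖ℓ a‖)

/-- The exponential series with coefficients `c` and frequencies `ℓ`. -/
def expSum (c : α → ℂ) (ℓ : α → E →L[ℂ] ℂ) (z : E) : ℂ :=
  ∑' a, c a * Complex.exp (ℓ a z)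

namespace HasRapidDecay

theorem mul_apply (h : HasRapidDecay c ℓ) (v : E) : HasRapidDecay (fun a => c a * ℓ a v) ℓ := by
  refine fun R => ((h (R + 1)).mul_left ‖v‖).of_nonneg_of_le (fun a => by positivity) fun a => ?_
  have hℓ : ‖ℓ a v‖ ≤ Real.exp ‖ℓ a‖ * ‖v‖ := (ℓ a).le_of_opNorm_le
    ((lt_add_one _).le.trans (Real.add_one_le_exp _)) v
  calc ‖c a * ℓ a v‖ * Real.exp (R * ‖ℓ a‖)
      ≤ ‖c a‖ * (Real.exp ‖ℓ a‖ * ‖v‖) * Real.exp (R * ‖ℓ a‖) := by rw [norm_mul]; gcongr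
    _ = ‖v‖ * (‖c a‖ * Real.exp ((R + 1) * ‖ℓ a‖)) := by
        rw [add_mul, one_mul, Real.exp_add]; ring

theorem summable (h : HasRapidDecay c ℓ) (z : E) : Summable fun a => c a * Complex.exp (ℓ a z) :=
  (h ‖z‖).of_norm_bounded (norm_mul_cexp_apply_le c ℓ le_rfl)

theorem hasFDerivAt_expSum (h : HasRapidDecay c ℓ) (z : E) :
    HasFDerivAt (expSum c ℓ) (∑' a, (c a * Complex.exp (ℓ a z)) • ℓ a) z := by
  refine hasFDerivAt_tsum_of_isPreconnected (h (‖z‖ + 1 + 1)) (s := Metric.ball 0 (‖z‖ + 1))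
    (f' := fun a w => (c a * Complex.exp (ℓ a w)) • ℓ a) Metric.isOpen_ball
    (convex_ball _ _).isPreconnected (fun a w _ => ?_)
    (fun a w hw => norm_mul_cexp_smul_le c ℓ (mem_ball_zero_iff.mp hw).le a) (by simp)
    (h.summable z) (by simp)
  simpa only [smul_smul] using ((ℓ a).hasFDerivAt (x := w)).cexp.const_mul (c a)

theorem fderiv_expSum_apply (h : HasRapidDecay c ℓ) (z v : E) :
    fderiv ℂ (expSum c ℓ) z v = expSum (fun a => c a * ℓ a v) ℓ z := by
  have hsum : Summable fun a => (c a * Complex.exp (ℓ a z)) • ℓ a :=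
    (h (‖z‖ + 1)).of_norm_bounded (norm_mul_cexp_smul_le c ℓ le_rfl)
  rw [(h.hasFDerivAt_expSum z).fderiv]
  refine ((ContinuousLinearMap.apply ℂ ℂ v).map_tsum hsum).trans (tsum_congr fun a => ?_)
  exact mul_right_comm _ _ _

theorem contDiff_expSum [FiniteDimensional ℂ E] (h : HasRapidDecay c ℓ) :
    ContDiff ℂ ∞ (expSum c ℓ) := by
  refine contDiff_infty.mpr fun n => ?_
  induction n generalizing c with
  | zero =>
    exact contDiff_zero.mpr (continuous_iff_continuousAt.mpr
      fun z => (h.hasFDerivAt_expSum z).continuousAt)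
  | succ n ih =>
    rw [Nat.cast_succ]
    refine contDiff_succ_iff_fderiv_apply.mpr
      ⟨fun z => (h.hasFDerivAt_expSum z).differentiableAt, by simp, fun v => ?_⟩
    simpa only [h.fderiv_expSum_apply _ v] using ih (h.mul_apply v)

end HasRapidDecay

end ExponentialSeries

section Theta

variable {ι : Type*} [Fintype ι]

/-- The linear form `z ↦ ⟨m, z⟩` attached to a lattice point `m`. -/
def latticeForm (m : ι → ℤ) : (ι → ℂ) →L[ℂ] ℂ :=
  ∑ i, (m i : ℂ) • ContinuousLinearMap.proj i

theorem latticeForm_apply (m : ι → ℤ) (z : ι → ℂ) : latticeForm m z = ∑ i, (m i : ℂ) * z i := by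
  simp [latticeForm]

theorem norm_latticeForm_le (m : ι → ℤ) : ‖latticeForm m‖ ≤ ∑ i, |(m i : ℝ)| := by
  refine ContinuousLinearMap.opNorm_le_bound _ (by positivity) fun z => ?_
  rw [latticeForm_apply, Finset.sum_mul]
  refine (norm_sum_le _ _).trans (Finset.sum_le_sum fun i _ => ?_)
  rw [norm_mul, Complex.norm_intCast]
  gcongr
  exact norm_le_pi_norm z i

theorem summable_exp_sum_abs_sub_sq (R : ℝ) {δ : ℝ} (hδ : 0 < δ) :
    Summable fun m : ι → ℤ => Real.exp (∑ i, (R * |(m i : ℝ)| - δ * (m i : ℝ) ^ 2)) := by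
  simp only [Real.exp_sum]
  refine summable_prod_pi (ι := ι)
    (f := fun _ (n : ℤ) => Real.exp (R * |(n : ℝ)| - δ * (n : ℝ) ^ 2))
    (fun _ _ => Real.exp_nonneg _) fun _ => ?_
  refine (summable_pow_mul_jacobiTheta₂_term_bound (R / (2 * π)) (T := δ / π) (by positivity)
    0).congr fun n => ?_
  rw [pow_zero, one_mul]
  congr 1
  push_cast
  field_simp
  ring

theorem hasRapidDecay_latticeForm {c : (ι → ℤ) → ℂ} {δ : ℝ} (hδ : 0 < δ)
    (hc : ∀ m, ‖c m‖ ≤ Real.exp (-δ * ∑ i, (m i : ℝ) ^ 2)) : HasRapidDecay c latticeForm := by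
  intro R
  refine (summable_exp_sum_abs_sub_sq (ι := ι) |R| hδ).of_nonneg_of_le
    (fun m => by positivity) fun m => ?_
  have hR : R * ‖latticeForm m‖ ≤ |R| * ∑ i, |(m i : ℝ)| :=
    (mul_le_mul_of_nonneg_right (le_abs_self R) (norm_nonneg _)).trans
      (by gcongr; exact norm_latticeForm_le m)
  calc ‖c m‖ * Real.exp (R * ‖latticeForm m‖)
      ≤ Real.exp (-δ * ∑ i, (m i : ℝ) ^ 2) * Real.exp (|R| * ∑ i, |(m i : ℝ)|) := by
        gcongr; exact hc m
    _ = Real.exp (∑ i, (|R| * |(m i : ℝ)| - δ * (m i : ℝ) ^ 2)) := by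
        rw [← Real.exp_add, Finset.sum_sub_distrib, ← Finset.mul_sum, ← Finset.mul_sum]
        congr 1; ring

variable {g : ℕ} (B : Matrix (Fin g) (Fin g) ℂ)

theorem exists_re_quadraticForm_le
    (hB : ∀ x : Fin g → ℝ, x ≠ 0 → ∑ i, ∑ j, (B i j).re * x i * x j < 0) :
    ∃ δ > 0, ∀ x : Fin g → ℝ, ∑ i, ∑ j, (B i j).re * x i * x j ≤ -δ * ∑ i, x i ^ 2 := by
  obtain ⟨δ, hδ, hle⟩ := exists_pos_mul_norm_sq_le
    (Q := fun x : EuclideanSpace ℝ (Fin g) => -∑ i, ∑ j, (B i j).re * x i * x j) (by fun_prop)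
    (fun c x => by
      simp only [PiLp.smul_apply, smul_eq_mul, mul_neg, Finset.mul_sum]
      congr! 3
      ring)
    fun x hx => neg_pos.mpr (hB x fun h => hx (by ext i; exact congrFun h i))
  refine ⟨δ, hδ, fun x => ?_⟩
  have hx := hle (WithLp.toLp 2 x)
  simp only [EuclideanSpace.real_norm_sq_eq] at hx
  linarith

theorem re_half_pairC_mulVec (x : Fin g → ℝ) :
    ((1 / 2) * pairC (B.mulVec fun i => (x i : ℂ)) fun i => (x i : ℂ)).re
      = (1 / 2) * ∑ i, ∑ j, (B i j).re * x i * x j := by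
  rw [show (1 / 2 : ℂ) = ((1 / 2 : ℝ) : ℂ) by push_cast; rfl, Complex.re_ofReal_mul]
  simp only [pairC, Matrix.mulVec, dotProduct, Finset.sum_mul, Complex.re_sum,
    Complex.re_mul_ofReal]
  congr! 3
  ring

theorem contDiff_theta
    (hB : ∀ x : Fin g → ℝ, x ≠ 0 → ∑ i, ∑ j, (B i j).re * x i * x j < 0) :
    ContDiff ℂ ∞ (theta B) := by
  obtain ⟨δ, hδ, hle⟩ := exists_re_quadraticForm_le B hB
  have htheta : theta B = expSum (fun m : Fin g → ℤ =>
      Complex.exp ((1 / 2) * pairC (B.mulVec fun i => (m i : ℂ)) fun i => (m i : ℂ)))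
      latticeForm := by
    funext z
    simp only [theta, expSum, Complex.exp_add, latticeForm_apply]
    rfl
  rw [htheta]
  refine (hasRapidDecay_latticeForm (half_pos hδ) fun m => ?_).contDiff_expSum
  rw [Complex.norm_exp, Real.exp_le_exp]
  have hre := re_half_pairC_mulVec B fun i => (m i : ℝ)
  simp only [Complex.ofReal_intCast] at hre
  rw [hre]
  linarith [hle fun i => (m i : ℝ)]

end Theta

section DirectionalDerivative

variable {E : Type*} [NormedAddCommGroup E] [NormedSpace ℂ E] {F G : E → ℂ} {U : Set E} {z : E}

/-- The directional derivative `D_V F`. -/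
def dirDeriv (V : E) (F : E → ℂ) (z : E) : ℂ := fderiv ℂ F z V

/-- The logarithmic directional derivative `D_V ln F = D_V F / F`, with junk value `0` at the zeros
of `F`. -/
def logDirDeriv (V : E) (F : E → ℂ) (z : E) : ℂ := dirDeriv V F z / F z

theorem dirDeriv_smul (a : ℂ) (V : E) (F : E → ℂ) : dirDeriv (a • V) F = a • dirDeriv V F :=
  funext fun z => map_smul (fderiv ℂ F z) a V

theorem dirDeriv_neg (V : E) (F : E → ℂ) : dirDeriv (-V) F = -dirDeriv V F :=
  funext fun z => map_neg (fderiv ℂ F z) V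

theorem dirDeriv_add_dir (V W : E) (F : E → ℂ) (z : E) :
    dirDeriv (V + W) F z = dirDeriv V F z + dirDeriv W F z :=
  map_add (fderiv ℂ F z) V W

theorem dirDeriv_comp_add (V s : E) (F : E → ℂ) :
    dirDeriv V (fun w => F (w + s)) = fun w => dirDeriv V F (w + s) :=
  funext fun _ => congrArg (fun L : E →L[ℂ] ℂ => L V) (fderiv_comp_add_right s)

theorem dirDeriv_neg_fun (V : E) (F : E → ℂ) : dirDeriv V (-F) = -dirDeriv V F :=
  funext fun _ => congrArg (fun L : E →L[ℂ] ℂ => L V) fderiv_neg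

theorem dirDeriv_smul_fun (V : E) (a : ℂ) (F : E → ℂ) : dirDeriv V (a • F) = a • dirDeriv V F :=
  congrArg (fun (F' : E → E →L[ℂ] ℂ) z => F' z V) (fderiv_const_smul_field a)

theorem dirDeriv_add (V : E) (hF : DifferentiableAt ℂ F z) (hG : DifferentiableAt ℂ G z) :
    dirDeriv V (fun w => F w + G w) z = dirDeriv V F z + dirDeriv V G z := by
  simp [dirDeriv, fderiv_fun_add hF hG]

theorem dirDeriv_add_const (V : E) (F : E → ℂ) (c : ℂ) :
    dirDeriv V (fun w => F w + c) = dirDeriv V F :=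
  funext fun _ => congrArg (fun L : E →L[ℂ] ℂ => L V) (fderiv_add_const c)

theorem dirDeriv_mul (V : E) (hF : DifferentiableAt ℂ F z) (hG : DifferentiableAt ℂ G z) :
    dirDeriv V (fun w => F w * G w) z = dirDeriv V F z * G z + F z * dirDeriv V G z := by
  simp only [dirDeriv, fderiv_fun_mul hF hG, _root_.add_apply, _root_.smul_apply, smul_eq_mul]
  ring

theorem dirDeriv_div (V : E) (hF : DifferentiableAt ℂ F z) (hG : DifferentiableAt ℂ G z)
    (hz : G z ≠ 0) : dirDeriv V (fun w => F w / G w) z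
      = (dirDeriv V F z * G z - F z * dirDeriv V G z) / G z ^ 2 := by
  have hinv : HasFDerivAt (fun w => (G w)⁻¹) (-(G z ^ 2)⁻¹ • fderiv ℂ G z) z :=
    (hasDerivAt_inv hz).comp_hasFDerivAt z hG.hasFDerivAt
  have hDinv : dirDeriv V (fun w => (G w)⁻¹) z = -(G z ^ 2)⁻¹ * dirDeriv V G z := by
    rw [dirDeriv, hinv.fderiv]; rfl
  simp only [div_eq_mul_inv]
  rw [dirDeriv_mul V hF hinv.differentiableAt, hDinv]
  field_simp
  ring

theorem dirDeriv_eqOn (V : E) (hU : IsOpen U) (h : Set.EqOn F G U) :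
    Set.EqOn (dirDeriv V F) (dirDeriv V G) U := fun _ hz =>
  congrArg (fun L : E →L[ℂ] ℂ => L V) (h.eventuallyEq_of_mem (hU.mem_nhds hz)).fderiv_eq

theorem differentiableAt_of_contDiffOn (hU : IsOpen U) (hF : ContDiffOn ℂ ∞ F U) (hz : z ∈ U) :
    DifferentiableAt ℂ F z :=
  (hF.contDiffAt (hU.mem_nhds hz)).differentiableAt (by simp)

theorem contDiffOn_dirDeriv (V : E) (hU : IsOpen U) (hF : ContDiffOn ℂ ∞ F U) :
    ContDiffOn ℂ ∞ (dirDeriv V F) U :=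
  ((contDiffOn_infty_iff_fderiv_of_isOpen hU).mp hF).2.clm_apply contDiffOn_const

theorem dirDeriv_dirDeriv_mul (V : E) (hU : IsOpen U) (hF : ContDiffOn ℂ ∞ F U)
    (hG : ContDiffOn ℂ ∞ G U) (hz : z ∈ U) :
    dirDeriv V (dirDeriv V fun w => F w * G w) z = dirDeriv V (dirDeriv V F) z * G z
      + 2 * dirDeriv V F z * dirDeriv V G z + F z * dirDeriv V (dirDeriv V G) z := by
  have hdiff {F : E → ℂ} (hF : ContDiffOn ℂ ∞ F U) {w : E} (hw : w ∈ U) :=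
    differentiableAt_of_contDiffOn hU hF hw
  have hFV := contDiffOn_dirDeriv V hU hF
  have hGV := contDiffOn_dirDeriv V hU hG
  have hD : Set.EqOn (dirDeriv V fun w => F w * G w)
      (fun w => dirDeriv V F w * G w + F w * dirDeriv V G w) U := fun w hw =>
    dirDeriv_mul V (hdiff hF hw) (hdiff hG hw)
  rw [dirDeriv_eqOn V hU hD hz, dirDeriv_add V (hdiff (hFV.mul hG) hz) (hdiff (hF.mul hGV) hz),
    dirDeriv_mul V (hdiff hFV hz) (hdiff hG hz), dirDeriv_mul V (hdiff hF hz) (hdiff hGV hz)]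
  ring

theorem contDiff_dirDeriv (V : E) (hF : ContDiff ℂ ∞ F) : ContDiff ℂ ∞ (dirDeriv V F) :=
  contDiffOn_univ.mp (contDiffOn_dirDeriv V isOpen_univ hF.contDiffOn)

theorem dirDeriv_comm (V W : E) (hU : IsOpen U) (hF : ContDiffOn ℂ ∞ F U) :
    Set.EqOn (dirDeriv V (dirDeriv W F)) (dirDeriv W (dirDeriv V F)) U := by
  intro z hz
  have hsymm : IsSymmSndFDerivAt ℂ F z :=
    (hF.contDiffAt (hU.mem_nhds hz)).isSymmSndFDerivAt
      (by simpa using WithTop.coe_le_coe.mpr (le_top : (2 : ℕ∞) ≤ ⊤))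
  have hfderiv : DifferentiableAt ℂ (fderiv ℂ F) z :=
    (((contDiffOn_infty_iff_fderiv_of_isOpen hU).mp hF).2.contDiffAt
      (hU.mem_nhds hz)).differentiableAt (by simp)
  have happly (V W : E) : dirDeriv V (dirDeriv W F) z = fderiv ℂ (fderiv ℂ F) z V W := by
    have : HasFDerivAt (dirDeriv W F) _ z := hfderiv.hasFDerivAt.clm_apply (hasFDerivAt_const W z)
    rw [dirDeriv, this.fderiv]
    simp
  rw [happly, happly, hsymm.eq]

theorem logDirDeriv_smul (a : ℂ) (V : E) (F : E → ℂ) :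
    logDirDeriv (a • V) F = a • logDirDeriv V F :=
  funext fun z => by simp [logDirDeriv, dirDeriv_smul, mul_div_assoc]

theorem contDiffOn_logDirDeriv (V : E) (hU : IsOpen U) (hF : ContDiffOn ℂ ∞ F U)
    (hF₀ : ∀ z ∈ U, F z ≠ 0) : ContDiffOn ℂ ∞ (logDirDeriv V F) U :=
  (contDiffOn_dirDeriv V hU hF).div hF hF₀

theorem dirDeriv_logDirDeriv (V W : E) (hU : IsOpen U) (hF : ContDiffOn ℂ ∞ F U) (hz : z ∈ U)
    (hFz : F z ≠ 0) : dirDeriv V (logDirDeriv W F) z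
      = dirDeriv V (dirDeriv W F) z / F z - logDirDeriv V F z * logDirDeriv W F z := by
  have hd := dirDeriv_div V
    (differentiableAt_of_contDiffOn hU (contDiffOn_dirDeriv W hU hF) hz)
    (differentiableAt_of_contDiffOn hU hF hz) hFz
  rw [show logDirDeriv W F = fun w => dirDeriv W F w / F w from rfl, hd, logDirDeriv]
  field_simp

theorem dirDeriv_logDirDeriv_comm (V W : E) (hU : IsOpen U) (hF : ContDiffOn ℂ ∞ F U)
    (hF₀ : ∀ z ∈ U, F z ≠ 0) :
    Set.EqOn (dirDeriv V (logDirDeriv W F)) (dirDeriv W (logDirDeriv V F)) U := by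
  intro z hz
  rw [dirDeriv_logDirDeriv V W hU hF hz (hF₀ z hz), dirDeriv_logDirDeriv W V hU hF hz (hF₀ z hz),
    dirDeriv_comm V W hU hF hz]
  ring

theorem dirDeriv_smul_logDirDeriv_smul (a b : ℂ) (V W : E) (F : E → ℂ) :
    dirDeriv (a • V) (logDirDeriv (b • W) F) = (a * b) • dirDeriv V (logDirDeriv W F) := by
  rw [logDirDeriv_smul, dirDeriv_smul, dirDeriv_smul_fun, smul_smul]

end DirectionalDerivative

section Density

theorem isOpen_ne_zero {X : Type*} [TopologicalSpace X] {f : X → ℂ} (hf : Continuous f) :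
    IsOpen {x | f x ≠ 0} :=
  isOpen_ne_fun hf continuous_const

variable {E : Type*} [NormedAddCommGroup E] [NormedSpace ℂ E] {F : E → ℂ}

theorem eq_zero_of_eventually_eq_zero (hF : Differentiable ℂ F) {z : E}
    (hz : ∀ᶠ w in 𝓝 z, F w = 0) : F = 0 := by
  funext w
  let γ : ℂ → E := AffineMap.lineMap z w
  have hγ : Differentiable ℂ γ := by fun_prop
  have hlocal : F ∘ γ =ᶠ[𝓝 0] 0 := by
    have hγ₀ : Tendsto γ (𝓝 0) (𝓝 z) := by simpa [γ] using hγ.continuous.tendsto 0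
    exact hγ₀.eventually hz
  have hline : F ∘ γ = 0 := funext fun s =>
    AnalyticOnNhd.eqOn_zero_of_preconnected_of_eventuallyEq_zero
      (fun s _ => (hF.comp hγ).analyticAt s) isPreconnected_univ (Set.mem_univ 0) hlocal
      (Set.mem_univ s)
  simpa [γ] using congrFun hline 1

theorem dense_ne_zero (hF : Differentiable ℂ F) (hF₀ : F ≠ 0) : Dense {z | F z ≠ 0} := by
  refine fun z => mem_closure_iff_frequently.mpr fun hz => hF₀ ?_
  exact eq_zero_of_eventually_eq_zero hF (hz.mono fun w hw => not_not.mp hw)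

theorem dense_ne_zero_and_comp_add_ne_zero (hF : Differentiable ℂ F) (hF₀ : F ≠ 0) (r : E) :
    Dense {z | F z ≠ 0 ∧ F (z + r) ≠ 0} := by
  have hdense := dense_ne_zero hF hF₀
  exact hdense.inter_of_isOpen_left (hdense.preimage (Homeomorph.addRight r).isOpenMap)
    (isOpen_ne_zero hF.continuous)

end Density

section Hirota

variable {E : Type*} [NormedAddCommGroup E] [NormedSpace ℂ E] {F G : E → ℂ} {U : Set E} {z : E}

/-- Hirota's first order bilinear operator `D_V F·G`. -/
def hirotaD (V : E) (F G : E → ℂ) (z : E) : ℂ := dirDeriv V F z * G z - F z * dirDeriv V G z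

/-- Hirota's second order bilinear operator `D_V² F·G`. -/
def hirotaD2 (V : E) (F G : E → ℂ) (z : E) : ℂ :=
  dirDeriv V (dirDeriv V F) z * G z - 2 * dirDeriv V F z * dirDeriv V G z
    + F z * dirDeriv V (dirDeriv V G) z

/-- The bilinear form `(D_W + D_V² - 2 K₁ D_V + K₁² + K₂) F·G` of the degenerate Fay identity. -/
def fayForm (V W : E) (K₁ K₂ : ℂ) (F G : E → ℂ) (z : E) : ℂ :=
  hirotaD W F G z + hirotaD2 V F G z - 2 * K₁ * hirotaD V F G z + (K₁ ^ 2 + K₂) * F z * G z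

theorem fayForm_comp_add (V W : E) (K₁ K₂ : ℂ) (F G : E → ℂ) (s z : E) :
    fayForm V W K₁ K₂ (fun w => F (w + s)) (fun w => G (w + s)) z
      = fayForm V W K₁ K₂ F G (z + s) := by
  simp only [fayForm, hirotaD, hirotaD2, dirDeriv_comp_add]

theorem fayForm_neg_swap (V W : E) (K₁ K₂ : ℂ) (F G : E → ℂ) (z : E) :
    fayForm (-V) (-W) K₁ K₂ G F z = fayForm V W K₁ K₂ F G z := by
  simp only [fayForm, hirotaD, hirotaD2, dirDeriv_neg, dirDeriv_neg_fun, Pi.neg_apply]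
  ring

theorem continuous_fayForm (V W : E) (K₁ K₂ : ℂ) (hF : ContDiff ℂ ∞ F) (hG : ContDiff ℂ ∞ G) :
    Continuous (fayForm V W K₁ K₂ F G) := by
  have hD (X : E) {F : E → ℂ} (hF : ContDiff ℂ ∞ F) := contDiff_dirDeriv X hF
  have hFV := (hD V hF).continuous
  have hGV := (hD V hG).continuous
  have hFW := (hD W hF).continuous
  have hGW := (hD W hG).continuous
  have hFVV := (hD V (hD V hF)).continuous
  have hGVV := (hD V (hD V hG)).continuous
  have hF := hF.continuous
  have hG := hG.continuous
  unfold fayForm hirotaD hirotaD2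
  fun_prop

theorem dirDeriv_dirDeriv_div (V : E) (hU : IsOpen U) (hF : ContDiffOn ℂ ∞ F U)
    (hG : ContDiffOn ℂ ∞ G U) (hG₀ : ∀ z ∈ U, G z ≠ 0) (hz : z ∈ U) :
    dirDeriv V (dirDeriv V fun w => F w / G w) z
      = hirotaD2 V F G z / G z ^ 2 - 2 * dirDeriv V (logDirDeriv V G) z * (F z / G z) := by
  set q : E → ℂ := fun w => F w / G w
  have hqU : ContDiffOn ℂ ∞ q U := hF.div hG hG₀
  have hF_eq : Set.EqOn F (fun w => q w * G w) U := fun w hw => (div_mul_cancel₀ _ (hG₀ w hw)).symm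
  have hz₀ := hG₀ z hz
  have hDF : dirDeriv V F z = dirDeriv V q z * G z + q z * dirDeriv V G z := by
    rw [dirDeriv_eqOn V hU hF_eq hz, dirDeriv_mul V (differentiableAt_of_contDiffOn hU hqU hz)
      (differentiableAt_of_contDiffOn hU hG hz)]
  rw [hirotaD2, dirDeriv_eqOn V hU (dirDeriv_eqOn V hU hF_eq) hz,
    dirDeriv_dirDeriv_mul V hU hqU hG hz, hDF, dirDeriv_logDirDeriv V V hU hG hz hz₀, hF_eq hz]
  simp only [logDirDeriv]
  field_simp
  ring

theorem fayForm_div_sq (V W : E) (K₁ K₂ : ℂ) (hU : IsOpen U) (hF : ContDiffOn ℂ ∞ F U)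
    (hG : ContDiffOn ℂ ∞ G U) (hG₀ : ∀ z ∈ U, G z ≠ 0) (hz : z ∈ U) :
    fayForm V W K₁ K₂ F G z / G z ^ 2
      = dirDeriv W (fun w => F w / G w) z + dirDeriv V (dirDeriv V fun w => F w / G w) z
        - 2 * K₁ * dirDeriv V (fun w => F w / G w) z
        + (K₁ ^ 2 + K₂ + 2 * dirDeriv V (logDirDeriv V G) z) * (F z / G z) := by
  have hFz := differentiableAt_of_contDiffOn hU hF hz
  have hGz := differentiableAt_of_contDiffOn hU hG hz
  have hz₀ := hG₀ z hz
  rw [dirDeriv_dirDeriv_div V hU hF hG hG₀ hz, dirDeriv_div V hFz hGz hz₀,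
    dirDeriv_div W hFz hGz hz₀, fayForm, hirotaD, hirotaD]
  field_simp
  ring

end Hirota

section Fay

variable {E : Type*} [NormedAddCommGroup E] [NormedSpace ℂ E] {T : E → ℂ} {V W r : E} {K₁ K₂ : ℂ}

/-- The degenerate Fay identity for an arbitrary function `T` in place of the theta function. -/
def DegenerateFay (T : E → ℂ) (V W r : E) (K₁ K₂ : ℂ) : Prop :=
  ∀ z, T z ≠ 0 → T (z + r) ≠ 0 →
    logDirDeriv W (fun w => T (w + r) / T w) z
      + dirDeriv V (logDirDeriv V fun w => T (w + r) / T w) z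
      + (logDirDeriv V (fun w => T (w + r) / T w) z - K₁) ^ 2
      + 2 * dirDeriv V (logDirDeriv V T) z + K₂ = 0

/-- The bilinear Fay identity for an arbitrary function `T` in place of the theta function. -/
def BilinearFay (T : E → ℂ) (V V' r : E) (q₁ q₂ : ℂ) : Prop :=
  ∀ z, T z ≠ 0 →
    dirDeriv V (logDirDeriv V' T) z = q₁ + q₂ * T (z + r) * T (z - r) / T z ^ 2

/-- The degenerate Fay identity in Hirota's bilinear form, which is free of denominators. -/
def HirotaFay (T : E → ℂ) (V W r : E) (K₁ K₂ : ℂ) : Prop :=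
  ∀ z, fayForm V W K₁ K₂ (fun w => T (w + r)) T z = 0

theorem HirotaFay.neg (h : HirotaFay T V W r K₁ K₂) : HirotaFay T (-V) (-W) (-r) K₁ K₂ := by
  intro z
  have hshift := fayForm_comp_add V W K₁ K₂ (fun w => T (w + r)) T (-r) z
  simp only [neg_add_cancel_right] at hshift
  rw [fayForm_neg_swap, hshift, h]

theorem contDiff_comp_add (hT : ContDiff ℂ ∞ T) (r : E) : ContDiff ℂ ∞ fun w => T (w + r) :=
  hT.comp (contDiff_id.add contDiff_const)

theorem DegenerateFay.fayForm_eq_zero (hT : ContDiff ℂ ∞ T) (h : DegenerateFay T V W r K₁ K₂)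
    {z : E} (hz : T z ≠ 0) (hzr : T (z + r) ≠ 0) :
    fayForm V W K₁ K₂ (fun w => T (w + r)) T z = 0 := by
  have hU := isOpen_ne_zero hT.continuous
  have hTr := contDiff_comp_add hT r
  set q : E → ℂ := fun w => T (w + r) / T w
  have hq : ContDiffOn ℂ ∞ q {z | T z ≠ 0} := hTr.contDiffOn.div hT.contDiffOn fun _ => id
  have hqz : q z ≠ 0 := div_ne_zero hzr hz
  have hfay : logDirDeriv W q z + dirDeriv V (logDirDeriv V q) z + (logDirDeriv V q z - K₁) ^ 2
      + 2 * dirDeriv V (logDirDeriv V T) z + K₂ = 0 := h z hz hzr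
  rw [dirDeriv_logDirDeriv V V hU hq hz hqz, logDirDeriv, logDirDeriv] at hfay
  have hzero : fayForm V W K₁ K₂ (fun w => T (w + r)) T z / T z ^ 2 = 0 := by
    rw [fayForm_div_sq V W K₁ K₂ hU hTr.contDiffOn hT.contDiffOn (fun _ => id) hz]
    change dirDeriv W q z + dirDeriv V (dirDeriv V q) z - 2 * K₁ * dirDeriv V q z
      + (K₁ ^ 2 + K₂ + 2 * dirDeriv V (logDirDeriv V T) z) * q z = 0
    field_simp at hfay
    refine mul_left_cancel₀ hqz ?_
    linear_combination hfay
  exact (div_eq_zero_iff.mp hzero).resolve_right (pow_ne_zero 2 hz)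

theorem DegenerateFay.hirotaFay (hT : ContDiff ℂ ∞ T) (h : DegenerateFay T V W r K₁ K₂) :
    HirotaFay T V W r K₁ K₂ := by
  rcases eq_or_ne T 0 with rfl | hT₀
  · exact fun z => by simp [fayForm, hirotaD, hirotaD2, dirDeriv]
  · have hdense := dense_ne_zero_and_comp_add_ne_zero (hT.differentiable (by simp)) hT₀ r
    exact congrFun ((continuous_fayForm V W K₁ K₂ (contDiff_comp_add hT r) hT).ext_on hdense
      continuous_const fun z hz => h.fayForm_eq_zero hT hz.1 hz.2)

theorem HirotaFay.linear (hT : ContDiff ℂ ∞ T) (h : HirotaFay T V W r K₁ K₂) {z : E}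
    (hz : T z ≠ 0) :
    dirDeriv W (fun w => T (w + r) / T w) z + dirDeriv V (dirDeriv V fun w => T (w + r) / T w) z
      - 2 * K₁ * dirDeriv V (fun w => T (w + r) / T w) z
      + (K₁ ^ 2 + K₂ + 2 * dirDeriv V (logDirDeriv V T) z) * (T (z + r) / T z) = 0 := by
  rw [← fayForm_div_sq V W K₁ K₂ (isOpen_ne_zero hT.continuous) (contDiff_comp_add hT r).contDiffOn
    hT.contDiffOn (fun _ => id) hz, h z, zero_div]

/-- One space direction of a Schrödinger equation for `q * exp`, where `k` is the rate of the
exponential along the space direction `v`, `u` is the time direction and `c` the potential. -/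
def DressedSchrodingerAt (ι : ℂ) (u v : E) (k c : ℂ) (q : E → ℂ) (z : E) : Prop :=
  ι * dirDeriv u q z + (1 / 2) * dirDeriv v (dirDeriv v q) z + k * dirDeriv v q z
    + ((1 / 2) * k ^ 2 + c) * q z = 0

theorem HirotaFay.dressedSchrodingerAt (hT : ContDiff ℂ ∞ T) (h : HirotaFay T V W r K₁ K₂)
    {ι : ℂ} (hι : ι ^ 2 = -1) (κ : ℂ) {z : E} (hz : T z ≠ 0) :
    DressedSchrodingerAt ι ((ι * κ ^ 2 / 2) • W) ((ι * κ) • V) (-(ι * κ * K₁))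
      (dirDeriv ((ι * κ) • V) (logDirDeriv ((ι * κ) • V) T) z - κ ^ 2 * K₂ / 2)
      (fun w => T (w + r) / T w) z := by
  have hlin := h.linear hT hz
  rw [DressedSchrodingerAt, dirDeriv_smul_logDirDeriv_smul]
  simp only [dirDeriv_smul, dirDeriv_smul_fun, Pi.smul_apply, smul_eq_mul]
  linear_combination (ι ^ 2 * κ ^ 2 / 2) * hlin - κ ^ 2 * K₂ / 2 * (T (z + r) / T z) * hι

end Fay

section DerivAlongLines

variable {E : Type*} [NormedAddCommGroup E] [NormedSpace ℂ E] {F : E → ℂ} {U : Set E}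
  {γ : ℂ → E} {ε Φ : ℂ → ℂ} {C k s : ℂ} {v : E}

theorem deriv_mul_cexp (hU : IsOpen U) (hF : ContDiffOn ℂ ∞ F U) (hγ : ∀ s, HasDerivAt γ v s)
    (hε : ∀ s, HasDerivAt ε k s) (hΦ : ∀ s, γ s ∈ U → Φ s = C * F (γ s) * Complex.exp (ε s))
    (hs : γ s ∈ U) :
    deriv Φ s = C * (dirDeriv v F (γ s) + k * F (γ s)) * Complex.exp (ε s) := by
  have hmem : ∀ᶠ s' in 𝓝 s, γ s' ∈ U := (hγ s).continuousAt.eventually_mem (hU.mem_nhds hs)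
  have hFγ : HasDerivAt (fun s => F (γ s)) (dirDeriv v F (γ s)) s :=
    (differentiableAt_of_contDiffOn hU hF hs).hasFDerivAt.comp_hasDerivAt s (hγ s)
  have hΦ_near : Φ =ᶠ[𝓝 s] fun s => C * F (γ s) * Complex.exp (ε s) := hmem.mono hΦ
  have hderiv : HasDerivAt (fun s => C * F (γ s) * Complex.exp (ε s)) _ s :=
    (hFγ.const_mul C).mul (hε s).cexp
  rw [hΦ_near.deriv_eq, hderiv.deriv]
  ring

theorem deriv_deriv_mul_cexp (hU : IsOpen U) (hF : ContDiffOn ℂ ∞ F U)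
    (hγ : ∀ s, HasDerivAt γ v s) (hε : ∀ s, HasDerivAt ε k s)
    (hΦ : ∀ s, γ s ∈ U → Φ s = C * F (γ s) * Complex.exp (ε s)) (hs : γ s ∈ U) :
    deriv (deriv Φ) s = C * (dirDeriv v (dirDeriv v F) (γ s) + 2 * k * dirDeriv v F (γ s)
      + k ^ 2 * F (γ s)) * Complex.exp (ε s) := by
  have hFv := contDiffOn_dirDeriv v hU hF
  have hkF : ContDiffOn ℂ ∞ (k • F) U := contDiffOn_const.smul hF
  have hdiff {F : E → ℂ} (hF : ContDiffOn ℂ ∞ F U) := differentiableAt_of_contDiffOn hU hF hs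
  rw [deriv_mul_cexp (F := fun z => dirDeriv v F z + (k • F) z) hU (hFv.add hkF) hγ hε
      (fun s hs => deriv_mul_cexp hU hF hγ hε hΦ hs) hs,
    dirDeriv_add v (hdiff hFv) (hdiff hkF), dirDeriv_smul_fun]
  simp only [Pi.smul_apply, smul_eq_mul]
  ring

theorem deriv_eq_dirDeriv (hU : IsOpen U) (hF : ContDiffOn ℂ ∞ F U)
    (hγ : ∀ s, HasDerivAt γ v s) (hΦ : ∀ s, γ s ∈ U → Φ s = F (γ s)) (hs : γ s ∈ U) :
    deriv Φ s = dirDeriv v F (γ s) := by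
  simpa using deriv_mul_cexp (C := 1) (ε := 0) hU hF hγ (fun s => hasDerivAt_const s 0)
    (by simpa using hΦ) hs

theorem deriv_deriv_eq_dirDeriv_dirDeriv (hU : IsOpen U) (hF : ContDiffOn ℂ ∞ F U)
    (hγ : ∀ s, HasDerivAt γ v s) (hΦ : ∀ s, γ s ∈ U → Φ s = F (γ s)) (hs : γ s ∈ U) :
    deriv (deriv Φ) s = dirDeriv v (dirDeriv v F) (γ s) :=
  deriv_eq_dirDeriv hU (contDiffOn_dirDeriv v hU hF) hγ
    (fun _ hs => deriv_eq_dirDeriv hU hF hγ hΦ hs) hs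

/-- The affine parametrisation with base point `p` whose partial derivatives are the constants
`a`, `b` and `c`. -/
def affineParam (p a b c : E) (ξ η t : ℂ) : E := p + ξ • a + η • b + t • c

theorem hasDerivAt_affineParam_fst (p a b c : E) (ξ η t : ℂ) :
    HasDerivAt (fun ξ => affineParam p a b c ξ η t) a ξ := by
  simpa [affineParam] using
    ((((hasDerivAt_id ξ).smul_const a).const_add p).add_const (η • b)).add_const (t • c)

theorem hasDerivAt_affineParam_snd (p a b c : E) (ξ η t : ℂ) :
    HasDerivAt (fun η => affineParam p a b c ξ η t) b η := by
  simpa [affineParam] using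
    (((hasDerivAt_id η).smul_const b).const_add (p + ξ • a)).add_const (t • c)

theorem hasDerivAt_affineParam_thd (p a b c : E) (ξ η t : ℂ) :
    HasDerivAt (fun t => affineParam p a b c ξ η t) c t := by
  simpa [affineParam] using ((hasDerivAt_id t).smul_const c).const_add (p + ξ • a + η • b)

end DerivAlongLines

section DaveyStewartson

/-- The linear Schrödinger equation with potential `φ`. Both wave functions of the complexified
Davey–Stewartson system satisfy it, with `ι = I` and `ι = -I`. -/
def SchrodingerAt (ι : ℂ) (ψ φ : ℂ → ℂ → ℂ → ℂ) (ξ η t : ℂ) : Prop :=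
  ι * deriv (fun t' : ℂ => ψ ξ η t') t
    + (1 / 2) * (deriv (fun ξ' : ℂ => deriv (fun ξ'' : ℂ => ψ ξ'' η t) ξ') ξ
        + deriv (fun η' : ℂ => deriv (fun η'' : ℂ => ψ ξ η'' t) η') η)
    + 2 * φ ξ η t * ψ ξ η t = 0

/-- The complexified Davey–Stewartson system at a point. -/
def DaveyStewartsonAt (ψ ψs φ : ℂ → ℂ → ℂ → ℂ) (ξ η t : ℂ) : Prop :=
  SchrodingerAt I ψ φ ξ η t ∧ SchrodingerAt (-I) ψs φ ξ η t ∧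
    deriv (fun ξ' : ℂ => deriv (fun η' : ℂ => φ ξ' η' t) η) ξ
      + (1 / 2) * (deriv (fun ξ' : ℂ => deriv (fun ξ'' : ℂ => ψ ξ'' η t * ψs ξ'' η t) ξ') ξ
          + deriv (fun η' : ℂ => deriv (fun η'' : ℂ => ψ ξ η'' t * ψs ξ η'' t) η') η) = 0

variable {E : Type*} [NormedAddCommGroup E] [NormedSpace ℂ E] {T : E → ℂ} {U : Set E} {v w : E}

theorem schrodingerAt_of_dressed {q : E → ℂ} (hU : IsOpen U) (hq : ContDiffOn ℂ ∞ q U)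
    {p u₁ u₂ : E} {ι C k₁ k₂ k₃ c₁ c₂ ξ η t : ℂ} {ψ φ : ℂ → ℂ → ℂ → ℂ}
    (hψ : ∀ ξ η t, ψ ξ η t = C * q (affineParam p v w (u₁ + u₂) ξ η t)
      * Complex.exp (affineParam 0 k₁ k₂ k₃ ξ η t))
    (hU_mem : affineParam p v w (u₁ + u₂) ξ η t ∈ U)
    (h₁ : DressedSchrodingerAt ι u₁ v k₁ c₁ q (affineParam p v w (u₁ + u₂) ξ η t))
    (h₂ : DressedSchrodingerAt ι u₂ w k₂ c₂ q (affineParam p v w (u₁ + u₂) ξ η t))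
    (hφ : 2 * φ ξ η t = c₁ + c₂ - ι * k₃) : SchrodingerAt ι ψ φ ξ η t := by
  have hξξ := deriv_deriv_mul_cexp hU hq (fun s => hasDerivAt_affineParam_fst p v w _ s η t)
    (fun s => hasDerivAt_affineParam_fst 0 k₁ k₂ k₃ s η t) (fun s _ => hψ s η t) hU_mem
  have hηη := deriv_deriv_mul_cexp hU hq (fun s => hasDerivAt_affineParam_snd p v w _ ξ s t)
    (fun s => hasDerivAt_affineParam_snd 0 k₁ k₂ k₃ ξ s t) (fun s _ => hψ ξ s t) hU_mem
  have ht := deriv_mul_cexp hU hq (fun s => hasDerivAt_affineParam_thd p v w _ ξ η s)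
    (fun s => hasDerivAt_affineParam_thd 0 k₁ k₂ k₃ ξ η s) (fun s _ => hψ ξ η s) hU_mem
  rw [dirDeriv_add_dir] at ht
  rw [DressedSchrodingerAt] at h₁ h₂
  rw [SchrodingerAt, ht, hφ, hψ]
  change _ + 1 / 2 * (deriv (deriv _) ξ + deriv (deriv _) η) + _ = 0
  rw [hξξ, hηη]
  linear_combination C * Complex.exp (affineParam 0 k₁ k₂ k₃ ξ η t) * (h₁ + h₂)

/-- The potential `φ` of the theta-functional solution as a function on `E`; `v` and `w` are the
directions of the variables `ξ` and `η`. -/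
def dsPotential (T : E → ℂ) (v w : E) (c : ℂ) (z : E) : ℂ :=
  (1 / 2) * (dirDeriv v (logDirDeriv v T) z + dirDeriv w (logDirDeriv w T) z) + c

theorem contDiffOn_dirDeriv_logDirDeriv (v w : E) (hU : IsOpen U) (hT : ContDiffOn ℂ ∞ T U)
    (hT₀ : ∀ z ∈ U, T z ≠ 0) : ContDiffOn ℂ ∞ (dirDeriv v (logDirDeriv w T)) U :=
  contDiffOn_dirDeriv v hU (contDiffOn_logDirDeriv w hU hT hT₀)

theorem contDiffOn_dsPotential (v w : E) (c : ℂ) (hU : IsOpen U) (hT : ContDiffOn ℂ ∞ T U)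
    (hT₀ : ∀ z ∈ U, T z ≠ 0) : ContDiffOn ℂ ∞ (dsPotential T v w c) U :=
  (contDiffOn_const.mul ((contDiffOn_dirDeriv_logDirDeriv v v hU hT hT₀).add
    (contDiffOn_dirDeriv_logDirDeriv w w hU hT hT₀))).add contDiffOn_const

theorem dirDeriv_dirDeriv_dsPotential (v w : E) (c : ℂ) (hU : IsOpen U)
    (hT : ContDiffOn ℂ ∞ T U) (hT₀ : ∀ z ∈ U, T z ≠ 0) {z : E} (hz : z ∈ U) :
    dirDeriv v (dirDeriv w (dsPotential T v w c)) z
      = (1 / 2) * (dirDeriv v (dirDeriv v (dirDeriv v (logDirDeriv w T))) z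
          + dirDeriv w (dirDeriv w (dirDeriv v (logDirDeriv w T))) z) := by
  have hL (a : E) := contDiffOn_logDirDeriv a hU hT hT₀
  have hDL (a b : E) := contDiffOn_dirDeriv a hU (hL b)
  have hDDL (a b c : E) := contDiffOn_dirDeriv a hU (hDL b c)
  have hdiff {F : E → ℂ} (hF : ContDiffOn ℂ ∞ F U) {z : E} (hz : z ∈ U) :=
    differentiableAt_of_contDiffOn hU hF hz
  have hv : Set.EqOn (dirDeriv w (dirDeriv v (logDirDeriv v T)))
      (dirDeriv v (dirDeriv v (logDirDeriv w T))) U :=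
    (dirDeriv_comm w v hU (hL v)).trans
      (dirDeriv_eqOn v hU (dirDeriv_logDirDeriv_comm w v hU hT hT₀))
  have hw : Set.EqOn (dirDeriv v (dirDeriv w (logDirDeriv w T)))
      (dirDeriv w (dirDeriv v (logDirDeriv w T))) U := dirDeriv_comm v w hU (hL w)
  have hsum : Set.EqOn
      (dirDeriv w fun z => dirDeriv v (logDirDeriv v T) z + dirDeriv w (logDirDeriv w T) z)
      (fun z => dirDeriv w (dirDeriv v (logDirDeriv v T)) z
        + dirDeriv w (dirDeriv w (logDirDeriv w T)) z) U := fun z hz =>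
    dirDeriv_add w (hdiff (hDL v v) hz) (hdiff (hDL w w) hz)
  have hpot : dirDeriv w (dsPotential T v w c) = (1 / 2 : ℂ) •
      dirDeriv w fun z => dirDeriv v (logDirDeriv v T) z + dirDeriv w (logDirDeriv w T) z :=
    (dirDeriv_add_const w _ c).trans (dirDeriv_smul_fun w _ _)
  rw [hpot, dirDeriv_smul_fun, Pi.smul_apply, smul_eq_mul, dirDeriv_eqOn v hU hsum hz,
    dirDeriv_add v (hdiff (hDDL w v v) hz) (hdiff (hDDL w w w) hz), dirDeriv_eqOn v hU hv hz,
    dirDeriv_comm v w hU (hDL w w) hz, dirDeriv_eqOn w hU hw hz]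

theorem dsPotential_evolution {p u : E} {a c ξ η t : ℂ} {φ N : ℂ → ℂ → ℂ → ℂ} (hU : IsOpen U)
    (hT : ContDiffOn ℂ ∞ T U) (hT₀ : ∀ z ∈ U, T z ≠ 0)
    (hφ : ∀ ξ η t, affineParam p v w u ξ η t ∈ U →
      φ ξ η t = dsPotential T v w c (affineParam p v w u ξ η t))
    (hN : ∀ ξ η t, affineParam p v w u ξ η t ∈ U →
      N ξ η t = -dirDeriv v (logDirDeriv w T) (affineParam p v w u ξ η t) + a)
    (hU_mem : affineParam p v w u ξ η t ∈ U) :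
    deriv (fun ξ' : ℂ => deriv (fun η' : ℂ => φ ξ' η' t) η) ξ
      + (1 / 2) * (deriv (deriv fun ξ' : ℂ => N ξ' η t) ξ
          + deriv (deriv fun η' : ℂ => N ξ η' t) η) = 0 := by
  have hξ (η t : ℂ) (s : ℂ) := hasDerivAt_affineParam_fst p v w u s η t
  have hη (ξ t : ℂ) (s : ℂ) := hasDerivAt_affineParam_snd p v w u ξ s t
  have hP := contDiffOn_dsPotential v w c hU hT hT₀
  have hM : ContDiffOn ℂ ∞ (fun z => (-dirDeriv v (logDirDeriv w T)) z + a) U :=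
    (contDiffOn_dirDeriv_logDirDeriv v w hU hT hT₀).neg.add contDiffOn_const
  have hφξη : deriv (fun ξ' : ℂ => deriv (fun η' : ℂ => φ ξ' η' t) η) ξ
      = dirDeriv v (dirDeriv w (dsPotential T v w c)) (affineParam p v w u ξ η t) :=
    deriv_eq_dirDeriv hU (contDiffOn_dirDeriv w hU hP) (hξ η t) (fun ξ' hξ' =>
      deriv_eq_dirDeriv hU hP (hη ξ' t) (fun η' => hφ ξ' η' t) hξ') hU_mem
  rw [hφξη, dirDeriv_dirDeriv_dsPotential v w c hU hT hT₀ hU_mem,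
    deriv_deriv_eq_dirDeriv_dirDeriv hU hM (hξ η t) (fun ξ' => hN ξ' η t) hU_mem,
    deriv_deriv_eq_dirDeriv_dirDeriv hU hM (hη ξ t) (fun η' => hN ξ η' t) hU_mem]
  have hM_dd (a' : E) : dirDeriv a' (dirDeriv a' fun z => (-dirDeriv v (logDirDeriv w T)) z + a)
      = -dirDeriv a' (dirDeriv a' (dirDeriv v (logDirDeriv w T))) := by
    rw [dirDeriv_add_const]
    exact (congrArg (dirDeriv a') (dirDeriv_neg_fun a' _)).trans (dirDeriv_neg_fun a' _)
  rw [hM_dd, hM_dd, Pi.neg_apply, Pi.neg_apply]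
  ring

theorem deriv_logDeriv_eq {γ : ℂ → E} (hU : IsOpen U) (hT : ContDiffOn ℂ ∞ T U)
    (hT₀ : ∀ z ∈ U, T z ≠ 0) (hγ : ∀ s, HasDerivAt γ v s) {s : ℂ} (hs : γ s ∈ U) :
    deriv (fun s => deriv (fun s' => T (γ s')) s / T (γ s)) s
      = dirDeriv v (logDirDeriv v T) (γ s) := by
  refine deriv_eq_dirDeriv hU (contDiffOn_logDirDeriv v hU hT hT₀) hγ (fun s hs => ?_) hs
  rw [deriv_eq_dirDeriv hU hT hγ (fun _ _ => rfl) hs, logDirDeriv]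

theorem dsPotential_affineParam (hT : ContDiff ℂ ∞ T) (c : ℂ) {p u : E} {ξ η t : ℂ}
    (hz : T (affineParam p v w u ξ η t) ≠ 0) :
    dsPotential T v w c (affineParam p v w u ξ η t)
      = (1 / 2) * deriv (fun ξ' => deriv (fun ξ'' => T (affineParam p v w u ξ'' η t)) ξ'
            / T (affineParam p v w u ξ' η t)) ξ
        + (1 / 2) * deriv (fun η' => deriv (fun η'' => T (affineParam p v w u ξ η'' t)) η'
            / T (affineParam p v w u ξ η' t)) η + c := by
  have hU := isOpen_ne_zero hT.continuous
  rw [dsPotential,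
    deriv_logDeriv_eq hU hT.contDiffOn (fun _ => id)
      (fun s => hasDerivAt_affineParam_fst p v w u s η t) hz,
    deriv_logDeriv_eq hU hT.contDiffOn (fun _ => id)
      (fun s => hasDerivAt_affineParam_snd p v w u ξ s t) hz]
  ring

theorem HirotaFay.schrodingerAt (hT : ContDiff ℂ ∞ T) {V₁ W₁ V₂ W₂ r p u : E}
    {K₁ L₁ K₂ L₂ ι κ₁ κ₂ C h ξ η t : ℂ} {ψ φ : ℂ → ℂ → ℂ → ℂ} (h₁ : HirotaFay T V₁ W₁ r K₁ L₁)
    (h₂ : HirotaFay T V₂ W₂ r K₂ L₂) (hι : ι ^ 2 = -1) (hv : v = (ι * κ₁) • V₁)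
    (hw : w = (ι * κ₂) • V₂) (hu : u = (ι * κ₁ ^ 2 / 2) • W₁ + (ι * κ₂ ^ 2 / 2) • W₂)
    (hψ : ∀ ξ η t, ψ ξ η t = C
      * (T (affineParam p v w u ξ η t + r) / T (affineParam p v w u ξ η t))
      * Complex.exp (affineParam 0 (-(ι * κ₁ * K₁)) (-(ι * κ₂ * K₂))
          (ι * (κ₁ ^ 2 * L₁ + κ₂ ^ 2 * L₂ + h) / 2) ξ η t))
    (hz : T (affineParam p v w u ξ η t) ≠ 0)
    (hφ : φ ξ η t = dsPotential T v w (h / 4) (affineParam p v w u ξ η t)) :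
    SchrodingerAt ι ψ φ ξ η t := by
  subst hv hw hu
  refine schrodingerAt_of_dressed (isOpen_ne_zero hT.continuous)
    ((contDiff_comp_add hT r).contDiffOn.div hT.contDiffOn fun _ => id) hψ hz
    (h₁.dressedSchrodingerAt hT hι κ₁ hz) (h₂.dressedSchrodingerAt hT hι κ₂ hz) ?_
  rw [hφ, dsPotential]
  linear_combination (κ₁ ^ 2 * L₁ + κ₂ ^ 2 * L₂ + h) / 2 * hι

theorem BilinearFay.dressed_mul_dressed {V V' r z : E} {q₁ q₂ : ℂ}
    (h : BilinearFay T V V' r q₁ q₂) (κ₁ κ₂ e : ℂ) {A : ℂ} (hA : A ≠ 0) (hz : T z ≠ 0) :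
    A * T (z + r) / T z * Complex.exp e
        * (-(κ₁ * κ₂ * q₂ / A) * T (z - r) / T z * Complex.exp (-e))
      = -dirDeriv ((I * κ₁) • V) (logDirDeriv ((I * κ₂) • -V') T) z + κ₁ * κ₂ * q₁ := by
  have hexp : Complex.exp e ≠ 0 := Complex.exp_ne_zero e
  rw [smul_neg, ← neg_smul, dirDeriv_smul_logDirDeriv_smul, Pi.smul_apply, h z hz, smul_eq_mul,
    Complex.exp_neg]
  field_simp
  linear_combination -(κ₁ * κ₂ * (q₁ * T z ^ 2 + q₂ * T (z + r) * T (z - r))) * I_sq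

theorem stmt_7_general {Va Wa Vb Wb r : E} {K1ab K2ab K1ba K2ba q₁ q₂ : ℂ}
    (hT : ContDiff ℂ ∞ T) (hFa : DegenerateFay T Va Wa r K1ab K2ab)
    (hFb : DegenerateFay T Vb Wb (-r) K1ba K2ba) (hBF : BilinearFay T Va Vb r q₁ q₂)
    {κ₁ κ₂ A : ℂ} (hA : A ≠ 0) {h : ℂ} {d : E} {Z : ℂ → ℂ → ℂ → E}
    (hZ : ∀ ξ η t, Z ξ η t = I • ((κ₁ * ξ) • Va - (κ₂ * η) • Vb
      + (t / 2) • (κ₁ ^ 2 • Wa - κ₂ ^ 2 • Wb)))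
    {G₁ G₂ G₃ : ℂ} (hG₁ : G₁ = κ₁ * K1ab) (hG₂ : G₂ = κ₂ * K1ba)
    (hG₃ : G₃ = κ₁ ^ 2 * K2ab + κ₂ ^ 2 * K2ba + h) {ψ ψs φ : ℂ → ℂ → ℂ → ℂ}
    (hψ : ∀ ξ η t, ψ ξ η t = A * T (Z ξ η t - d + r) / T (Z ξ η t - d)
      * Complex.exp (I * (-(G₁ * ξ) - G₂ * η + G₃ * t / 2)))
    (hψs : ∀ ξ η t, ψs ξ η t = -(κ₁ * κ₂ * q₂ / A) * T (Z ξ η t - d - r) / T (Z ξ η t - d)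
      * Complex.exp (I * (G₁ * ξ + G₂ * η - G₃ * t / 2)))
    (hφ : ∀ ξ η t, φ ξ η t =
      (1 / 2) * deriv (fun ξ' => deriv (fun ξ'' => T (Z ξ'' η t - d)) ξ' / T (Z ξ' η t - d)) ξ
        + (1 / 2) * deriv (fun η' =>
            deriv (fun η'' => T (Z ξ η'' t - d)) η' / T (Z ξ η' t - d)) η
        + h / 4)
    (ξ η t : ℂ) (hz : T (Z ξ η t - d) ≠ 0) : DaveyStewartsonAt ψ ψs φ ξ η t := by
  obtain ⟨v, hv⟩ : ∃ v, v = (I * κ₁) • Va := ⟨_, rfl⟩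
  obtain ⟨w, hw⟩ : ∃ w, w = (I * κ₂) • -Vb := ⟨_, rfl⟩
  obtain ⟨u, hu⟩ : ∃ u, u = (I * κ₁ ^ 2 / 2) • Wa + (I * κ₂ ^ 2 / 2) • -Wb := ⟨_, rfl⟩
  have hp (ξ η t : ℂ) : Z ξ η t - d = affineParam (-d) v w u ξ η t := by
    rw [hZ, affineParam, hv, hw, hu]
    module
  simp only [hp] at hψ hψs hφ hz
  have hφ_eq (ξ η t : ℂ) (hz : T (affineParam (-d) v w u ξ η t) ≠ 0) :
      φ ξ η t = dsPotential T v w (h / 4) (affineParam (-d) v w u ξ η t) :=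
    (hφ ξ η t).trans (dsPotential_affineParam hT _ hz).symm
  have ha := hFa.hirotaFay hT
  have hb := hFb.hirotaFay hT
  have hψ_schrodinger : SchrodingerAt I ψ φ ξ η t := by
    refine ha.schrodingerAt (C := A) hT (neg_neg r ▸ hb.neg) I_sq hv hw hu (fun ξ η t => ?_) hz
      (hφ_eq ξ η t hz)
    rw [hψ, mul_div_assoc, hG₁, hG₂, hG₃]
    simp only [affineParam, smul_eq_mul]
    ring_nf
  have hψs_schrodinger : SchrodingerAt (-I) ψs φ ξ η t := by
    refine ha.neg.schrodingerAt (κ₁ := κ₁) (κ₂ := κ₂)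
      (C := -(κ₁ * κ₂ * q₂ / A)) hT hb (by simp) (by rw [hv]; module)
      (by rw [hw]; module) (by rw [hu]; module) (fun ξ η t => ?_) hz (hφ_eq ξ η t hz)
    rw [hψs, mul_div_assoc, hG₁, hG₂, hG₃, sub_eq_add_neg _ r]
    simp only [affineParam, smul_eq_mul]
    ring_nf
  refine ⟨hψ_schrodinger, hψs_schrodinger,
    dsPotential_evolution (N := fun ξ η t => ψ ξ η t * ψs ξ η t) (a := κ₁ * κ₂ * q₁)
      (isOpen_ne_zero hT.continuous) hT.contDiffOn (fun _ => id) hφ_eq (fun ξ η t hz => ?_) hz⟩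
  have hneg : I * (G₁ * ξ + G₂ * η - G₃ * t / 2) = -(I * (-(G₁ * ξ) - G₂ * η + G₃ * t / 2)) := by
    ring
  subst hv hw
  rw [hψ, hψs, hneg]
  exact hBF.dressed_mul_dressed κ₁ κ₂ _ hA hz

end DaveyStewartson

/-- theta-functional solutions of the complexified Davey–Stewartson
system. -/
theorem stmt_7 {g : ℕ} (hg : 1 ≤ g) (B : Matrix (Fin g) (Fin g) ℂ)
    (hBsymm : B.IsSymm)
    (hBneg : ∀ x : Fin g → ℝ, x ≠ 0 → ∑ i, ∑ j, (B i j).re * x i * x j < 0)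
    (Va Wa Vb Wb r : Fin g → ℂ) (K1ab K2ab K1ba K2ba q₁ q₂ : ℂ)
    (hFa : DegFay B Va Wa r K1ab K2ab)
    (hFb : DegFay B Vb Wb (-r) K1ba K2ba)
    (hBF : BilinFay B Va Vb r q₁ q₂)
    (κ₁ κ₂ A : ℂ) (hκ₁ : κ₁ ≠ 0) (hκ₂ : κ₂ ≠ 0) (hA : A ≠ 0)
    (h : ℂ) (d : Fin g → ℂ)
    (Z : ℂ → ℂ → ℂ → Fin g → ℂ)
    (hZ : ∀ ξ η t : ℂ, Z ξ η t = fun i =>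
      I * (κ₁ * Va i * ξ - κ₂ * Vb i * η + (κ₁ ^ 2 * Wa i - κ₂ ^ 2 * Wb i) * t / 2))
    (G₁ G₂ G₃ : ℂ) (hG₁ : G₁ = κ₁ * K1ab) (hG₂ : G₂ = κ₂ * K1ba)
    (hG₃ : G₃ = κ₁ ^ 2 * K2ab + κ₂ ^ 2 * K2ba + h)
    (ψ ψs φ : ℂ → ℂ → ℂ → ℂ)
    (hψ : ∀ ξ η t : ℂ, ψ ξ η t =
      A * theta B (Z ξ η t - d + r) / theta B (Z ξ η t - d) *
        Complex.exp (I * (-(G₁ * ξ) - G₂ * η + G₃ * t / 2)))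
    (hψs : ∀ ξ η t : ℂ, ψs ξ η t =
      -(κ₁ * κ₂ * q₂ / A) * theta B (Z ξ η t - d - r) / theta B (Z ξ η t - d) *
        Complex.exp (I * (G₁ * ξ + G₂ * η - G₃ * t / 2)))
    (hφ : ∀ ξ η t : ℂ, φ ξ η t =
      (1 / 2) * deriv (fun ξ' : ℂ =>
          deriv (fun ξ'' : ℂ => theta B (Z ξ'' η t - d)) ξ' / theta B (Z ξ' η t - d)) ξ
        + (1 / 2) * deriv (fun η' : ℂ =>
            deriv (fun η'' : ℂ => theta B (Z ξ η'' t - d)) η' / theta B (Z ξ η' t - d)) η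
        + h / 4) :
    ∀ ξ η t : ℂ, theta B (Z ξ η t - d) ≠ 0 →
      (I * deriv (fun t' : ℂ => ψ ξ η t') t
        + (1 / 2) * (deriv (fun ξ' : ℂ => deriv (fun ξ'' : ℂ => ψ ξ'' η t) ξ') ξ
            + deriv (fun η' : ℂ => deriv (fun η'' : ℂ => ψ ξ η'' t) η') η)
        + 2 * φ ξ η t * ψ ξ η t = 0) ∧
      (-I * deriv (fun t' : ℂ => ψs ξ η t') t
        + (1 / 2) * (deriv (fun ξ' : ℂ => deriv (fun ξ'' : ℂ => ψs ξ'' η t) ξ') ξ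
            + deriv (fun η' : ℂ => deriv (fun η'' : ℂ => ψs ξ η'' t) η') η)
        + 2 * φ ξ η t * ψs ξ η t = 0) ∧
      (deriv (fun ξ' : ℂ => deriv (fun η' : ℂ => φ ξ' η' t) η) ξ
        + (1 / 2) * (deriv (fun ξ' : ℂ =>
              deriv (fun ξ'' : ℂ => ψ ξ'' η t * ψs ξ'' η t) ξ') ξ
            + deriv (fun η' : ℂ =>
              deriv (fun η'' : ℂ => ψ ξ η'' t * ψs ξ η'' t) η') η)
        = 0) := by
  refine fun ξ η t hz => stmt_7_general (contDiff_theta B hBneg) hFa hFb hBF hA (fun ξ η t => ?_)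
    hG₁ hG₂ hG₃ hψ hψs hφ ξ η t hz
  rw [hZ]
  ext i
  simp only [Pi.smul_apply, Pi.add_apply, Pi.sub_apply, smul_eq_mul]
  ring
end
end
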